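/- arXiv:math/9811058 — 2 statements merged into one kernel-verified Lean document; each statement's English description precedes it below -/
import Mathlib

section
/- Let n be a natural number and p a prime with p ≥ n. Let 𝓔 be a transversal for the isomorphism classes of groups of order p^n and exponent p (i.e. a finite family of groups of order p^n and exponent p containing exactly one representative of each isomorphism class). For each E ∈ 𝓔 let N_E be the set of group endomorphisms σ : E → E such that the image of σ is contained in the center Z(E) and the n-fold composite σ^n is the trivial endomorphism (sending all of E to the identity). The automorphism group Aut(E) acts on N_E by conjugation. Then the number of isomorphism classes of groups of order p^n whose derived subgroup has exponent dividing p equals the rational number ∑_{E ∈ 𝓔} ∑_{φ ∈ N_E} 1/|φ^{Aut(E)}|, where φ^{Aut(E)} denotes the Aut(E)-orbit of φ under conjugation. -/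
open scoped commutatorElement

/-- Bundled groups `P` of order `p ^ n` in which `⁅x, y⁆ ^ p = 1` for all `x, y`,
i.e. the derived subgroup has exponent dividing `p`. -/
def GoodGroup (p n : ℕ) : Type 1 :=
  { q : Σ G : Type, Group G //
      letI := q.2
      Nat.card q.1 = p ^ n ∧ ∀ x y : q.1, ⁅x, y⁆ ^ p = 1 }

/-- Group isomorphism between two bundled groups. -/
def groupIsoRel (p n : ℕ) (q₁ q₂ : GoodGroup p n) : Prop :=
  letI := q₁.1.2; letI := q₂.1.2
  Nonempty (q₁.1.1 ≃* q₂.1.1)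

/-- For a group `E`, the set `N_E` of endomorphisms `σ` with image inside the centre and
with `σ ^ n` the trivial endomorphism. -/
def NSet (n : ℕ) (E : Type*) [Group E] : Set (E →* E) :=
  {σ | (∀ x : E, σ x ∈ Subgroup.center E) ∧ ∀ x : E, (⇑σ)^[n] x = 1}

/-- The orbit `φ^{Aut(E)}` of an endomorphism `φ` under the conjugation action of `Aut(E)`. -/
def autOrbit (E : Type*) [Group E] (φ : E →* E) : Set (E →* E) :=
  {τ | ∃ α : E ≃* E, ∀ x : E, τ x = α (φ (α.symm x))}

set_option linter.style.haveILetI false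

namespace CF

/-- A filtration of a group by subgroups with `[F i, F j] ≤ F (i+j)`. -/
structure Filt (G : Type) [Group G] where
  F : ℕ → Subgroup G
  anti : ∀ i, F (i + 1) ≤ F i
  comm : ∀ i j, ∀ x ∈ F i, ∀ y ∈ F j, ⁅x, y⁆ ∈ F (i + j)

theorem Filt.le_zero {G : Type} [Group G] (A : Filt G) (i : ℕ) : A.F i ≤ A.F 0 := by
  induction i with
  | zero => exact le_rfl
  | succ k ih => exact (A.anti k).trans ih

theorem Filt.conj {G : Type} [Group G] (A : Filt G) {i : ℕ} {x g : G} (hx : x ∈ A.F i)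
    (hg : g ∈ A.F 0) : g * x * g⁻¹ ∈ A.F i := by
  have h := A.comm 0 i g hg x hx
  rw [zero_add] at h
  have : g * x * g⁻¹ = ⁅g, x⁆ * x := by rw [commutatorElement_def]; group
  rw [this]
  exact mul_mem h hx

theorem Filt.conj' {G : Type} [Group G] (A : Filt G) {i : ℕ} {x g : G} (hx : x ∈ A.F i)
    (hg : g ∈ A.F 0) : g⁻¹ * x * g ∈ A.F i := by
  have := A.conj hx (inv_mem hg)
  simpa using this

/-- The Host–Kra square of a filtration. -/
def Filt.sq {G : Type} [Group G] (A : Filt G) : Filt (G × G) where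
  F i :=
    { carrier := {x | x.1 ∈ A.F i ∧ x.2 ∈ A.F i ∧ x.1⁻¹ * x.2 ∈ A.F (i + 1)}
      mul_mem' := by
        rintro ⟨a, a'⟩ ⟨b, b'⟩ ⟨h1, h2, h3⟩ ⟨h4, h5, h6⟩
        refine ⟨mul_mem h1 h4, mul_mem h2 h5, ?_⟩
        simp only [Prod.mk_mul_mk] at *
        have : (a * b)⁻¹ * (a' * b') = (b⁻¹ * (a⁻¹ * a') * b) * (b⁻¹ * b') := by group
        rw [this]
        exact mul_mem (A.conj' h3 (A.le_zero _ h4)) h6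
      one_mem' := by simp [one_mem]
      inv_mem' := by
        rintro ⟨a, a'⟩ ⟨h1, h2, h3⟩
        refine ⟨inv_mem h1, inv_mem h2, ?_⟩
        simp only [Prod.inv_mk] at *
        have : (a⁻¹)⁻¹ * a'⁻¹ = a * (a⁻¹ * a')⁻¹ * a⁻¹ := by group
        rw [this]
        exact A.conj (inv_mem h3) (A.le_zero _ h1) }
  anti i := by
    rintro ⟨a, b⟩ ⟨h1, h2, h3⟩
    exact ⟨A.anti _ h1, A.anti _ h2, A.anti _ h3⟩
  comm i j := by
    rintro ⟨a, a'⟩ ⟨h1, h2, h3⟩ ⟨b, b'⟩ ⟨h4, h5, h6⟩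
    refine ⟨A.comm i j _ h1 _ h4, A.comm i j _ h2 _ h5, ?_⟩
    simp only at *
    change ⁅a, b⁆⁻¹ * ⁅a', b'⁆ ∈ _
    have e : ⁅a, b⁆⁻¹ * ⁅a', b'⁆ = (⁅a, b⁆⁻¹ * (a * ⁅a⁻¹ * a', b'⁆ * a⁻¹) * ⁅a, b⁆) *
        (b * ⁅a, b⁻¹ * b'⁆ * b⁻¹) := by
      simp only [commutatorElement_def]; group
    rw [e]
    have k1 : ⁅a⁻¹ * a', b'⁆ ∈ A.F (i + j + 1) := by
      have := A.comm _ _ _ h3 _ h5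
      rwa [show i + 1 + j = i + j + 1 by ring] at this
    have k2 : ⁅a, b⁻¹ * b'⁆ ∈ A.F (i + j + 1) := A.comm _ _ _ h1 _ h6
    exact mul_mem (A.conj' (A.conj k1 (A.le_zero _ h1)) (A.le_zero _ (A.comm _ _ _ h1 _ h4)))
      (A.conj k2 (A.le_zero _ h4))

/-- Polynomial sequences (up to order `k`). -/
def IsPoly : (k : ℕ) → (G : Type) → [Group G] → Filt G → (ℕ → G) → Prop
  | 0, _, _, A, g => ∀ n, g n ∈ A.F 0
  | k + 1, G, _, A, g => IsPoly k (G × G) A.sq (fun n => (g n, g (n + 1)))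

theorem IsPoly.mul (k : ℕ) : ∀ {G : Type} [Group G] {A : Filt G} {g h : ℕ → G},
    IsPoly k G A g → IsPoly k G A h → IsPoly k G A (fun n => g n * h n) := by
  induction k with
  | zero => intro G _ A g h h1 h2 n; exact mul_mem (h1 n) (h2 n)
  | succ k ih => intro G _ A g h h1 h2; exact ih h1 h2

theorem IsPoly.inv (k : ℕ) : ∀ {G : Type} [Group G] {A : Filt G} {g : ℕ → G},
    IsPoly k G A g → IsPoly k G A (fun n => (g n)⁻¹) := by
  induction k with
  | zero => intro G _ A g h1 n; exact inv_mem (h1 n)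
  | succ k ih => intro G _ A g h1; exact ih h1

theorem isPoly_choose (k : ℕ) : ∀ {G : Type} [Group G] {A : Filt G} (i : ℕ) (v : G),
    v ∈ A.F i → IsPoly k G A (fun n => v ^ (n.choose i)) := by
  induction k with
  | zero => intro G _ A i v hv n; exact pow_mem (A.le_zero _ hv) _
  | succ k ih =>
    intro G _ A i v hv
    change IsPoly k (G × G) A.sq _
    have h1 := ih (A := A.sq) i (v, v) ⟨hv, hv, by simp [one_mem]⟩
    cases i with
    | zero => simpa using h1
    | succ i =>
      have h2 := ih (A := A.sq) i (1, v) ⟨one_mem _, A.anti _ hv, by simpa using hv⟩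
      have h3 := IsPoly.mul k h1 h2
      convert h3 using 2 with n
      simp [Nat.choose_succ_succ, ← pow_add, add_comm]

theorem IsPoly.mem (k : ℕ) : ∀ {G : Type} [Group G] {A : Filt G} {g : ℕ → G},
    IsPoly k G A g → (∀ i < k, g i = 1) → g k ∈ A.F k := by
  induction k with
  | zero => intro G _ A g h1 _; exact h1 0
  | succ k ih =>
    intro G _ A g h1 h2
    have := ih h1 (fun i hi => by
      rw [h2 i (by omega), h2 (i+1) (by omega)]; rfl)
    have h3 := this.2.2
    simpa [h2 k (by omega)] using h3

theorem IsPoly.of_succ (k : ℕ) : ∀ {G : Type} [Group G] {A : Filt G} {g : ℕ → G},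
    IsPoly (k + 1) G A g → IsPoly k G A g := by
  induction k with
  | zero => intro G _ A g h1 n; exact (h1 n).1
  | succ k ih => intro G _ A g h1; exact ih (g := fun n => (g n, g (n+1))) h1

theorem IsPoly.of_le {k l : ℕ} (h : k ≤ l) {G : Type} [Group G] {A : Filt G} {g : ℕ → G}
    (hg : IsPoly l G A g) : IsPoly k G A g := by
  induction l, h using Nat.le_induction with
  | base => exact hg
  | succ l _ ih => exact ih hg.of_succ

/-- If `G_p = 1` and `G_2` has exponent `p` then a polynomial sequence with `g 0 = 1` satisfies
`g p = (g 1)^p`. -/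
theorem IsPoly.eval_p {p : ℕ} (hp : p.Prime) {G : Type} [Group G] {A : Filt G} {g : ℕ → G}
    (hg : IsPoly p G A g) (h0 : g 0 = 1) (hbot : A.F p = ⊥)
    (hexp : ∀ x ∈ A.F 2, x ^ p = 1) : g p = (g 1) ^ p := by
  have key : ∀ m, 2 ≤ m → m ≤ p → ∃ r : ℕ → G, IsPoly p G A r ∧ (∀ i < m, r i = 1) ∧
      r p = (g 1 ^ p)⁻¹ * g p := by
    intro m hm
    induction m, hm using Nat.le_induction with
    | base =>
      intro h2p
      have h1 : g 1 ∈ A.F 1 := IsPoly.mem 1 (hg.of_le (by omega)) (by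
        intro i hi; interval_cases i; exact h0)
      refine ⟨fun n => (g 1 ^ (n.choose 1))⁻¹ * g n, ?_, ?_, ?_⟩
      · exact IsPoly.mul p (IsPoly.inv p (isPoly_choose p 1 _ h1)) hg
      · intro i hi
        interval_cases i <;> simp [h0]
      · simp
    | succ m hm ih =>
      intro hmp
      obtain ⟨r, hr, hr1, hr2⟩ := ih (by omega)
      have hv : r m ∈ A.F m := IsPoly.mem m (hr.of_le (by omega)) hr1
      have hv2 : r m ∈ A.F 2 := by
        have : ∀ j, A.F (2 + j) ≤ A.F 2 := by
          intro j
          induction j with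
          | zero => exact le_rfl
          | succ j ih => exact (A.anti _).trans ih
        have h := this (m - 2)
        rw [show 2 + (m - 2) = m by omega] at h
        exact h hv
      refine ⟨fun n => (r m ^ (n.choose m))⁻¹ * r n, ?_, ?_, ?_⟩
      · exact IsPoly.mul p (IsPoly.inv p (isPoly_choose p m _ hv)) hr
      · intro i hi
        rcases Nat.lt_succ_iff_lt_or_eq.mp hi with h | h
        · simp [hr1 i h, Nat.choose_eq_zero_of_lt h]
        · subst h; simp
      · have hd : p ∣ p.choose m := hp.dvd_choose_self (by omega) (by omega)
        obtain ⟨c, hc⟩ := hd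
        simp only
        rw [hc, pow_mul, hexp _ hv2, hr2]
        simp
  obtain ⟨r, hr, hr1, hr2⟩ := key p hp.two_le le_rfl
  have := IsPoly.mem p hr hr1
  rw [hbot, Subgroup.mem_bot, hr2] at this
  exact (inv_mul_eq_one.mp this).symm

theorem hall {p : ℕ} (hp : p.Prime) {G : Type} [Group G] (A : Filt G) (h1 : A.F 1 = ⊤)
    (hbot : A.F p = ⊥) (hexp : ∀ x ∈ A.F 2, x ^ p = 1) (x y : G) :
    (x * y) ^ p = x ^ p * y ^ p := by
  have hg := IsPoly.mul p (isPoly_choose p (A := A) 1 x (by simp [h1]))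
    (isPoly_choose p (A := A) 1 y (by simp [h1]))
  have := hg.eval_p hp (by simp) hbot hexp
  simpa using this.symm

theorem comm_le_of_rotate {G : Type} [Group G] {H₁ H₂ H₃ N : Subgroup G} [N.Normal]
    (h1 : ⁅⁅H₂, H₃⁆, H₁⁆ ≤ N) (h2 : ⁅⁅H₃, H₁⁆, H₂⁆ ≤ N) : ⁅⁅H₁, H₂⁆, H₃⁆ ≤ N := by
  have key : ∀ K : Subgroup G, K ≤ N ↔ K.map (QuotientGroup.mk' N) = ⊥ := by
    intro K
    rw [Subgroup.map_eq_bot_iff, QuotientGroup.ker_mk']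
  rw [key] at h1 h2 ⊢
  simp only [Subgroup.map_commutator] at *
  exact Subgroup.commutator_commutator_eq_bot_of_rotate h1 h2

theorem lcs_comm {G : Type} [Group G] (j : ℕ) : ∀ i,
    ⁅(⊤ : Subgroup G).lowerCentralSeries i, (⊤ : Subgroup G).lowerCentralSeries j⁆ ≤
      (⊤ : Subgroup G).lowerCentralSeries (i + j + 1) := by
  induction j with
  | zero => intro i; rw [Subgroup.lowerCentralSeries_succ]; rfl
  | succ j ih =>
    intro i
    rw [Subgroup.commutator_comm, Subgroup.lowerCentralSeries_succ _ j]
    apply comm_le_of_rotate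
    · rw [Subgroup.commutator_comm ⊤, ← Subgroup.lowerCentralSeries_succ]
      have := ih (i + 1)
      rwa [show i + 1 + j + 1 = i + (j + 1) + 1 by ring] at this
    · rw [show i + (j + 1) + 1 = (i + j + 1) + 1 by ring, Subgroup.lowerCentralSeries_succ]
      exact Subgroup.commutator_mono (ih i) le_rfl

/-- The lower central filtration, with `F 0 = F 1 = ⊤`. -/
def lcsFilt (G : Type) [Group G] : Filt G where
  F i := (⊤ : Subgroup G).lowerCentralSeries (i - 1)
  anti i := Subgroup.lowerCentralSeries_antitone _ (by omega)
  comm i j x hx y hy := by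
    have h := lcs_comm (j - 1) (i - 1) (Subgroup.commutator_mem_commutator hx hy)
    have hle : i + j - 1 ≤ i - 1 + (j - 1) + 1 := by omega
    exact Subgroup.lowerCentralSeries_antitone (⊤ : Subgroup G) hle h

theorem class_le {p : ℕ} (hp : p.Prime) (m : ℕ) : ∀ (G : Type) [Group G],
    Nat.card G = p ^ m → 2 ≤ m → Group.nilpotencyClass G ≤ m - 1 := by
  haveI := Fact.mk hp
  induction m using Nat.strong_induction_on with
  | _ m ih =>
    intro G _ hG hm
    haveI : Finite G := Nat.finite_of_card_ne_zero (by rw [hG]; exact (pow_pos hp.pos _).ne')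
    have hpG : IsPGroup p G := IsPGroup.of_card hG
    haveI : Group.IsNilpotent G := hpG.isNilpotent
    have hnt : Nontrivial G := by
      rw [← Finite.one_lt_card_iff_nontrivial, hG]
      exact Nat.one_lt_pow (by omega) hp.one_lt
    obtain ⟨m', hm'⟩ := (hpG.to_quotient (Subgroup.center G)).exists_card_eq
    have hlt : m' < m := by
      have h1 := Subgroup.card_eq_card_quotient_mul_card_subgroup (Subgroup.center G)
      haveI := hpG.center_nontrivial
      have h2 : 1 < Nat.card (Subgroup.center G) := Finite.one_lt_card
      have : p ^ m' < p ^ m := by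
        rw [← hG, h1, ← hm']
        exact lt_mul_of_one_lt_right Nat.card_pos h2
      exact (Nat.pow_lt_pow_iff_right hp.one_lt).mp this
    by_cases h2 : 2 ≤ m'
    · have := ih m' hlt _ hm' h2
      rw [Group.nilpotencyClass_quotient_center] at this
      omega
    · haveI : IsCyclic (G ⧸ Subgroup.center G) := by
        interval_cases m'
        · have : Subsingleton (G ⧸ Subgroup.center G) := by
            rw [← Finite.card_le_one_iff_subsingleton, hm']; simp
          infer_instance
        · exact isCyclic_of_prime_card (p := p) (by simpa using hm')
      have hc := MonoidHom.isMulCommutative_of_isCyclic_of_ker_le_center (QuotientGroup.mk' (Subgroup.center G))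
        (by simp)
      have : Group.nilpotencyClass G ≤ 1 := by
        rw [Group.IsNilpotent.nilpotencyClass_le_one_iff]
        exact hc
      omega

theorem power_hom {p : ℕ} (hp : p.Prime) (m : ℕ) : ∀ (G : Type) [Group G],
    Nat.card G = p ^ m → m ≤ p → (∀ x y : G, ⁅x, y⁆ ^ p = 1) →
    ∀ x y : G, (x * y) ^ p = x ^ p * y ^ p := by
  haveI := Fact.mk hp
  induction m using Nat.strong_induction_on with
  | _ m ih =>
    intro G _ hG hmp hc
    haveI : Finite G := Nat.finite_of_card_ne_zero (by rw [hG]; exact (pow_pos hp.pos _).ne')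
    have hpG : IsPGroup p G := IsPGroup.of_card hG
    haveI : Group.IsNilpotent G := hpG.isNilpotent
    by_cases hm : 2 ≤ m
    swap
    · have hcyc : IsCyclic G := by
        interval_cases m
        · have : Subsingleton G := by
            rw [← Finite.card_le_one_iff_subsingleton, hG]; simp
          infer_instance
        · exact isCyclic_of_prime_card (p := p) (by simpa using hG)
      intro x y
      letI := IsCyclic.commGroup (α := G)
      exact mul_pow x y p
    have hnt : Nontrivial G := by
      rw [← Finite.one_lt_card_iff_nontrivial, hG]
      exact Nat.one_lt_pow (by omega) hp.one_lt
    have hcl := class_le hp m G hG hm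
    have hbot : (⊤ : Subgroup G).lowerCentralSeries (p - 1) = ⊥ :=
      (Subgroup.lowerCentralSeries_eq_bot_iff_nilpotencyClass_le).mpr (by omega)
    refine hall hp (lcsFilt G) rfl hbot ?_
    -- the derived subgroup has exponent p
    set D := commutator G with hD
    have hD2 : (lcsFilt G).F 2 = D := Subgroup.top_lowerCentralSeries_one
    rw [hD2]
    obtain ⟨m', hm'⟩ := (hpG.to_subgroup D).exists_card_eq
    have hlt : m' < m := by
      have hne : D ≠ ⊤ := by
        haveI : Group.IsSolvable G := inferInstance
        exact (Group.IsSolvable.commutator_lt_top_of_nontrivial G).ne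
      have : p ^ m' < p ^ m := by
        rw [← hG, ← hm']
        refine lt_of_le_of_ne (Subgroup.card_le_card_group D) (fun h => hne ?_)
        exact Subgroup.eq_top_of_card_eq D h
      exact (Nat.pow_lt_pow_iff_right hp.one_lt).mp this
    have hpow := ih m' hlt D hm' (by omega) (fun x y => by
      apply Subtype.ext; exact hc x y)
    intro x hx
    have : ∀ x (hx : x ∈ Subgroup.closure (commutatorSet G)), x ^ p = 1 := by
      intro x hx
      induction hx using Subgroup.closure_induction with
      | mem x h => obtain ⟨a, b, rfl⟩ := h; exact hc a b
      | one => simp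
      | mul a b ha hb h1 h2 =>
        rw [← commutator_eq_closure] at ha hb
        have := congrArg Subtype.val (hpow ⟨a, ha⟩ ⟨b, hb⟩)
        simp only [Subgroup.coe_pow, Subgroup.coe_mul] at this
        rw [this, h1, h2, one_mul]
      | inv a _ h1 => rw [inv_pow, h1, inv_one]
    apply this
    rwa [← commutator_eq_closure]

end CF

namespace CF

open Finset in
/-- Evaluation of an integer array at a family `y` with respect to `τ`. -/
def ev {ι Y : Type} [Fintype ι] [AddCommGroup Y] (τ : Y →+ Y) (e : ι → ℕ) (y : ι → Y)
    (a : ι → ℕ → ℤ) : Y := ∑ i, ∑ j ∈ range (e i), a i j • τ^[j] (y i)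

/-- The shift of a sequence. -/
def sh (a : ℕ → ℤ) : ℕ → ℤ
  | 0 => 0
  | j + 1 => a j

/-- The shift of an array. -/
def shA {ι : Type} (a : ι → ℕ → ℤ) : ι → ℕ → ℤ := fun i => sh (a i)

theorem zsmul_eq_val {p : ℕ} [Fact p.Prime] {K : Type} [AddCommGroup K] [Module (ZMod p) K]
    (g : ZMod p) (z : K) : g • z = ((g.val : ℕ) : ℤ) • z := by
  rw [natCast_zsmul, ← Nat.cast_smul_eq_nsmul (ZMod p), ZMod.natCast_zmod_val]

theorem extend_basis {F V ι : Type} [Field F] [AddCommGroup V] [Module F V] [Finite V] [Fintype ι]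
    {z : ι → V}
    (hz : LinearIndependent F z) : ∃ (κ : Type) (_ : Fintype κ) (b : (ι ⊕ κ) → V),
      (∀ i, b (Sum.inl i) = z i) ∧ (∀ x, ∃ c : ι ⊕ κ → F, ∑ s, c s • b s = x) ∧
      (∀ c : ι ⊕ κ → F, ∑ s, c s • b s = 0 → ∀ s, c s = 0) := by
  let b : Module.Basis (ι ⊕ _) F V := Module.Basis.sumExtend hz
  have hf : Finite (ι ⊕ (Module.Basis.sumExtendIndex hz)) := by
    refine Finite.of_injective b b.injective
  haveI : Finite (Module.Basis.sumExtendIndex hz) := Finite.of_injective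
    (fun x => (Sum.inr x : ι ⊕ (Module.Basis.sumExtendIndex hz))) Sum.inr_injective
  letI := Fintype.ofFinite (Module.Basis.sumExtendIndex hz)
  refine ⟨Module.Basis.sumExtendIndex hz, inferInstance, b, ?_, ?_, ?_⟩
  · intro i
    simp [b, Module.Basis.sumExtend]
    rfl
  · intro x
    exact ⟨b.repr x, b.sum_repr x⟩
  · exact Fintype.linearIndependent_iff.mp b.linearIndependent

theorem jordan {p : ℕ} [hp : Fact p.Prime] (ε : ℤ) (N : ℕ) : ∀ (W : Type) [AddCommGroup W]
    [Finite W] (τ : W →+ W), (∀ w, τ^[N] w = 0) → (∀ w, (p : ℤ) • w = ε • τ w) →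
    ∃ (ι : Type) (_ : Fintype ι) (e : ι → ℕ) (w : ι → W), (∀ i, 1 ≤ e i) ∧
      (∀ i, τ^[e i] (w i) = 0) ∧ (∀ x, ∃ a, ev τ e w a = x) ∧
      ∀ a : ι → ℕ → ℤ, (∀ i j, |a i j| < p) → ev τ e w a = 0 → ∀ i, ∀ j < e i, a i j = 0 := by
  induction N with
  | zero =>
    intro W _ _ τ h0 _
    refine ⟨Empty, inferInstance, Empty.elim, Empty.elim, ?_, ?_, ?_, ?_⟩
    · rintro ⟨⟩
    · rintro ⟨⟩
    · intro x
      refine ⟨Empty.elim, ?_⟩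
      have := h0 x
      simp only [Function.iterate_zero, id] at this
      simp [ev, this]
    · rintro a _ _ ⟨⟩
  | succ N ih =>
    intro W _ _ τ hN hpw
    have hsucc : ∀ (j : ℕ) (x : W), τ (τ^[j] x) = τ^[j + 1] x :=
      fun j x => (Function.iterate_succ_apply' τ j x).symm
    set R := τ.range with hR
    let τ' : R →+ R := τ.rangeRestrict.comp R.subtype
    have hτ' : ∀ (x : R), ((τ' x : R) : W) = τ x := fun x => rfl
    have hit : ∀ (j : ℕ) (x : R), ((τ'^[j] x : R) : W) = τ^[j] x := by
      intro j
      induction j with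
      | zero => intro x; rfl
      | succ j ihj => intro x; rw [Function.iterate_succ_apply, Function.iterate_succ_apply, ihj, hτ']
    obtain ⟨ι, _, e, w, he, hw0, hspan, hind⟩ := ih R τ' (by
      rintro ⟨_, x, rfl⟩
      apply Subtype.ext
      rw [hit]
      exact hN x) (by
      intro w
      apply Subtype.ext
      exact hpw w)
    have hu : ∀ i, ∃ u, τ u = w i := fun i => (w i).2
    choose u hu using hu
    have hituw : ∀ i j, ((τ'^[j] (w i) : R) : W) = τ^[j+1] (u i) := by
      intro i j; rw [hit, ← hu, Function.iterate_succ_apply]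
    have hu0 : ∀ i, τ^[e i + 1] (u i) = 0 := by
      intro i; rw [← hituw, hw0]; rfl
    have hev' : ∀ a, ((ev τ' e w a : R) : W) =
        ∑ i, ∑ j ∈ Finset.range (e i), a i j • τ^[j + 1] (u i) := by
      intro a
      simp only [ev, AddSubgroup.val_finsetSum, AddSubgroup.coe_zsmul, hituw]
    set K := τ.ker with hK
    letI : Module (ZMod p) K := AddCommGroup.zmodModule (by
      rintro ⟨x, hx⟩
      apply Subtype.ext
      have h1 := hpw x
      have hx' : τ x = 0 := hx
      rw [hx', smul_zero, natCast_zsmul] at h1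
      exact h1)
    let z : ι → K := fun i => ⟨τ^[e i] (u i), by
      change τ _ = 0
      rw [hsucc]; exact hu0 i⟩
    have hz : LinearIndependent (ZMod p) z := by
      classical
      rw [Fintype.linearIndependent_iff]
      intro g hg i
      have h1 := hind (fun i j => if j = e i - 1 then ((g i).val : ℤ) else 0) (by
        intro i j
        split_ifs
        · rw [abs_of_nonneg (by positivity)]
          exact_mod_cast ZMod.val_lt (g i)
        · simpa using hp.out.pos) (by
        apply Subtype.ext
        rw [hev']
        have := congrArg Subtype.val hg
        rw [AddSubgroup.val_finsetSum] at this
        refine Eq.trans ?_ this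
        refine Finset.sum_congr rfl (fun i _ => ?_)
        simp only [ite_smul, zero_smul]
        rw [Finset.sum_ite_eq', if_pos (by have := he i; simp; omega), zsmul_eq_val]
        simp only [AddSubgroup.coe_zsmul, z]
        rw [Nat.sub_add_cancel (he i)]) i (e i - 1) (by have := he i; omega)
      simp only [if_true] at h1
      rw [← ZMod.val_eq_zero]
      exact_mod_cast h1
    obtain ⟨κ, _, b, hbl, hbs, hbi⟩ := extend_basis hz
    refine ⟨ι ⊕ κ, inferInstance, Sum.elim (fun i => e i + 1) (fun _ => 1),
      Sum.elim u (fun k => (b (Sum.inr k) : W)), ?_, ?_, ?_, ?_⟩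
    · rintro (i | k) <;> simp
    · rintro (i | k)
      · exact hu0 i
      · exact (b (Sum.inr k)).2
    all_goals
      have hev : ∀ a, ev τ (Sum.elim (fun i => e i + 1) (fun _ => 1))
          (Sum.elim u (fun k : κ => (b (Sum.inr k) : W))) a =
          (∑ i, ∑ j ∈ Finset.range (e i), a (Sum.inl i) j • τ^[j] (u i)) +
          ((∑ i, a (Sum.inl i) (e i) • τ^[e i] (u i)) +
            ∑ k, a (Sum.inr k) 0 • (b (Sum.inr k) : W)) := by
        intro a
        rw [ev, Fintype.sum_sum_type]
        simp only [Sum.elim_inl, Sum.elim_inr, Finset.sum_range_succ, Finset.sum_add_distrib,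
          Finset.range_zero, Finset.sum_empty, zero_add, Function.iterate_zero, id, add_assoc]
    · intro x
      obtain ⟨a, ha⟩ := hspan ⟨τ x, x, rfl⟩
      have ha' := congrArg Subtype.val ha
      rw [hev'] at ha'
      set x1 := ∑ i, ∑ j ∈ Finset.range (e i), a i j • τ^[j] (u i) with hx1
      have hk : x - x1 ∈ K := by
        change τ _ = 0
        rw [map_sub, sub_eq_zero, hx1]
        rw [map_sum]
        simp only [map_sum, map_zsmul, hsucc]
        exact ha'.symm
      obtain ⟨c, hrep⟩ := hbs ⟨x - x1, hk⟩
      have hrep' := congrArg Subtype.val hrep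
      rw [AddSubgroup.val_finsetSum, Fintype.sum_sum_type] at hrep'
      refine ⟨fun s j => Sum.elim (fun i => if j < e i then a i j else
        ((c (Sum.inl i)).val : ℤ))
        (fun k => ((c (Sum.inr k)).val : ℤ)) s, ?_⟩
      rw [hev]
      have e1 : x = x1 + (x - x1) := by abel
      conv_rhs => rw [e1]
      congr 1
      · rw [hx1]
        refine Finset.sum_congr rfl (fun i _ => Finset.sum_congr rfl (fun j hj => ?_))
        simp [Finset.mem_range.mp hj]
      · refine Eq.trans ?_ hrep'
        congr 1
        · refine Finset.sum_congr rfl (fun i _ => ?_)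
          rw [zsmul_eq_val, hbl]
          simp [z]
        · refine Finset.sum_congr rfl (fun i _ => ?_)
          rw [zsmul_eq_val]
          simp
    · intro a ha h0
      rw [hev] at h0
      have h1 := congrArg τ h0
      have hzero1 : τ (∑ i, a (Sum.inl i) (e i) • τ^[e i] (u i)) = 0 := by
        simp only [map_sum, map_zsmul, hsucc, hu0, smul_zero,
          Finset.sum_const_zero]
      have hzero2 : τ (∑ k, a (Sum.inr k) 0 • (b (Sum.inr k) : W)) = 0 := by
        simp only [map_sum, map_zsmul]
        refine Finset.sum_eq_zero (fun k _ => ?_)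
        have : τ (b (Sum.inr k) : W) = 0 := (b (Sum.inr k)).2
        rw [this, smul_zero]
      rw [map_add, map_add, hzero1, hzero2, add_zero, add_zero, map_zero] at h1
      have h2 := hind (fun i j => a (Sum.inl i) j) (fun i j => ha _ _) (by
        apply Subtype.ext
        rw [hev']
        simp only [map_sum, map_zsmul, hsucc] at h1
        exact h1)
      have h3 : (∑ i, ∑ j ∈ Finset.range (e i), a (Sum.inl i) j • τ^[j] (u i)) = 0 := by
        refine Finset.sum_eq_zero (fun i _ => Finset.sum_eq_zero (fun j hj => ?_))
        have := h2 i j (Finset.mem_range.mp hj)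
        rw [this, zero_smul]
      rw [h3, zero_add] at h0
      have h4 : ∑ s, (Sum.elim (fun i => (a (Sum.inl i) (e i) : ZMod p))
          (fun k => (a (Sum.inr k) 0 : ZMod p)) s) • b s = 0 := by
        apply Subtype.ext
        rw [AddSubgroup.val_finsetSum, Fintype.sum_sum_type]
        refine Eq.trans ?_ h0
        congr 1
        · refine Finset.sum_congr rfl (fun i _ => ?_)
          rw [hbl, Sum.elim_inl, Int.cast_smul_eq_zsmul]
          simp [z]
        · refine Finset.sum_congr rfl (fun i _ => ?_)
          rw [Sum.elim_inr, Int.cast_smul_eq_zsmul]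
          simp
      have h5 := hbi _ h4
      have hsmall : ∀ t : ℤ, |t| < p → (t : ZMod p) = 0 → t = 0 := by
        intro t ht h
        rw [ZMod.intCast_zmod_eq_zero_iff_dvd] at h
        exact Int.eq_zero_of_abs_lt_dvd h ht
      rintro (i | k) j hj
      · simp only [Sum.elim_inl] at hj
        rcases Nat.lt_succ_iff_lt_or_eq.mp hj with h | h
        · exact h2 i j h
        · subst h
          exact hsmall _ (ha _ _) (h5 (Sum.inl i))
      · simp only [Sum.elim_inr, Nat.lt_one_iff] at hj
        subst hj
        exact hsmall _ (ha _ _) (h5 (Sum.inr k))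

end CF

namespace CF

/-- Carries. -/
def carry (p : ℕ) (ε : ℤ) (a : ℕ → ℤ) : ℕ → ℤ
  | 0 => a 0 / p
  | j + 1 => (a (j + 1) + ε * carry p ε a j) / p

/-- Reduced digits. -/
def red (p : ℕ) (ε : ℤ) (a : ℕ → ℤ) (j : ℕ) : ℤ :=
  a j + ε * sh (carry p ε a) j - p * carry p ε a j

theorem red_mem {p : ℕ} (hp : 0 < p) (ε : ℤ) (a : ℕ → ℤ) (j : ℕ) :
    0 ≤ red p ε a j ∧ red p ε a j < p := by
  have hp' : (0 : ℤ) < p := by exact_mod_cast hp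
  have key : red p ε a j = (a j + ε * sh (carry p ε a) j) % p := by
    rw [red, Int.emod_def]
    cases j with
    | zero => simp [sh, carry]
    | succ j => simp [sh, carry]
  rw [key]
  exact ⟨Int.emod_nonneg _ hp'.ne', Int.emod_lt_of_pos _ hp'⟩

theorem carry_unique {p : ℕ} (hp : 0 < p) {ε : ℤ} {a c : ℕ → ℤ} {e : ℕ}
    (h : ∀ j < e, 0 ≤ a j + ε * sh c j - p * c j ∧ a j + ε * sh c j - p * c j < p) :
    ∀ j < e, carry p ε a j = c j := by
  have hp' : (0 : ℤ) < p := by exact_mod_cast hp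
  have key : ∀ s t : ℤ, 0 ≤ s - p * t ∧ s - p * t < p → s / p = t := by
    intro s t hst
    rw [Int.ediv_eq_iff_of_pos hp']
    constructor <;> nlinarith
  intro j
  induction j with
  | zero =>
    intro hj
    have := h 0 hj
    simp only [sh, mul_zero, add_zero] at this
    exact key _ _ this
  | succ j ih =>
    intro hj
    have := h (j + 1) hj
    rw [carry, ih (by omega)]
    exact key _ _ this

theorem carry_congr {p : ℕ} (hp : 0 < p) {ε : ℤ} {a b : ℕ → ℤ} {e : ℕ}
    (h : ∀ j < e, a j = b j) : ∀ j < e, carry p ε a j = carry p ε b j := by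
  apply carry_unique hp
  intro j hj
  rw [h j hj]
  exact red_mem hp ε b j

theorem sh_add (a b : ℕ → ℤ) (j : ℕ) : sh (a + b) j = sh a j + sh b j := by
  cases j <;> simp [sh]

theorem sh_zero (j : ℕ) : sh 0 j = 0 := by
  cases j <;> simp [sh]

theorem carry_add {p : ℕ} (hp : 0 < p) (ε : ℤ) (s t : ℕ → ℤ) (j : ℕ) :
    carry p ε (s + t) j = carry p ε s j + carry p ε (red p ε s + t) j := by
  refine carry_unique (c := carry p ε s + carry p ε (red p ε s + t)) (e := j + 1) hp ?_ j
    (Nat.lt_succ_self j)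
  intro i _
  have h := red_mem hp ε (red p ε s + t) i
  have e1 : (s + t) i + ε * sh (carry p ε s + carry p ε (red p ε s + t)) i
      - p * (carry p ε s + carry p ε (red p ε s + t)) i = red p ε (red p ε s + t) i := by
    rw [sh_add]
    simp only [red, Pi.add_apply]
    ring
  rw [e1]
  exact h

theorem carry_small {p : ℕ} (hp : 0 < p) (ε : ℤ) {s : ℕ → ℤ} {e : ℕ}
    (h : ∀ j < e, 0 ≤ s j ∧ s j < p) : ∀ j < e, carry p ε s j = 0 := by
  refine carry_unique (c := 0) hp ?_
  intro j hj
  rw [sh_zero]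
  simpa using h j hj

theorem carry_sh {p : ℕ} (hp : 0 < p) (ε : ℤ) (s : ℕ → ℤ) (j : ℕ) :
    carry p ε (sh s) j = sh (carry p ε s) j := by
  refine carry_unique (e := j + 1) hp ?_ j (Nat.lt_succ_self j)
  intro i _
  cases i with
  | zero => simp [sh, hp]
  | succ i => exact red_mem hp ε s i

theorem sh_mem {p : ℕ} (hp : 0 < p) {s : ℕ → ℤ} (h : ∀ j, 0 ≤ s j ∧ s j < p) (j : ℕ) :
    0 ≤ sh s j ∧ sh s j < p := by
  cases j with
  | zero => simp [sh, hp]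
  | succ j => exact h j

theorem carry_p {p : ℕ} (hp : 0 < p) {ε : ℤ} (hε : ε = 0 ∨ ε = 1) {s : ℕ → ℤ}
    (h : ∀ j, 0 ≤ s j ∧ s j < p) (j : ℕ) :
    carry p ε (p • s) j = s j := by
  refine carry_unique (e := j + 1) hp ?_ j (Nat.lt_succ_self j)
  intro i _
  have := sh_mem hp h i
  have hp' : (0 : ℤ) < p := by exact_mod_cast hp
  rcases hε with rfl | rfl
  · simp [hp]
  · simpa using this

section
variable {ι Y : Type} [Fintype ι] [AddCommGroup Y] (τ : Y →+ Y) (e : ι → ℕ) (y : ι → Y)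

theorem ev_add (a b : ι → ℕ → ℤ) : ev τ e y (a + b) = ev τ e y a + ev τ e y b := by
  simp only [ev, Pi.add_apply, add_smul, Finset.sum_add_distrib]

theorem ev_smul (n : ℤ) (a : ι → ℕ → ℤ) : ev τ e y (n • a) = n • ev τ e y a := by
  simp only [ev, Pi.smul_apply, smul_eq_mul, mul_smul, Finset.smul_sum]

theorem ev_congr {a b : ι → ℕ → ℤ} (h : ∀ i, ∀ j < e i, a i j = b i j) :
    ev τ e y a = ev τ e y b := by
  refine Finset.sum_congr rfl (fun i _ => Finset.sum_congr rfl (fun j hj => ?_))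
  rw [h i j (Finset.mem_range.mp hj)]

theorem ev_sh (hy : ∀ i, τ^[e i] (y i) = 0) (a : ι → ℕ → ℤ) :
    ev τ e y (shA a) = τ (ev τ e y a) := by
  simp only [ev, map_sum, map_zsmul]
  refine Finset.sum_congr rfl (fun i _ => ?_)
  have h1 := Finset.sum_range_succ (fun j => shA a i j • τ^[j] (y i)) (e i)
  rw [Finset.sum_range_succ', hy i] at h1
  simp only [shA, sh, smul_zero, zero_smul, add_zero] at h1
  simp only [shA]
  refine Eq.trans h1.symm ?_
  refine Finset.sum_congr rfl (fun j _ => ?_)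
  rw [Function.iterate_succ_apply']

theorem ev_red {p : ℕ} {ε : ℤ} (hy : ∀ i, τ^[e i] (y i) = 0) (hpy : ∀ y, (p : ℤ) • y = ε • τ y)
    (a : ι → ℕ → ℤ) : ev τ e y (fun i => red p ε (a i)) = ev τ e y a := by
  have e1 : (fun i => red p ε (a i)) + (p : ℤ) • (fun i => carry p ε (a i)) =
      a + ε • shA (fun i => carry p ε (a i)) := by
    ext i j
    simp only [Pi.add_apply, Pi.smul_apply, smul_eq_mul, red, shA]
    ring
  have e2 := congrArg (ev τ e y) e1
  rw [ev_add, ev_add, ev_smul, ev_smul, ev_sh τ e y hy, hpy] at e2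
  exact add_right_cancel e2

theorem ev_zero : ev τ e y 0 = 0 := by simp [ev]

end

end CF

namespace CF

/-- The data of a central nilpotent endomorphism governing `p`-th powers. -/
structure Dat (p : ℕ) (ε : ℤ) (G : Type) [Group G] (π : G →* G) : Prop where
  central : ∀ x y, π x * y = y * π x
  nil : ∃ N : ℕ, ∀ x, π^[N] x = 1
  pow : ∀ x, x ^ p = π x ^ ε

theorem frame {p : ℕ} {ε : ℤ} {G : Type} [Group G] [Finite G] {π : G →* G} (h : Dat p ε G π) :
    ∃ (W : Type) (_ : AddCommGroup W) (_ : Finite W) (τ : W →+ W) (v : W → G),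
      (∀ a b, v (a + b) = v a * v b) ∧ (∀ (n : ℤ) a, v (n • a) = v a ^ n) ∧
      Function.Injective v ∧ (∀ a, v (τ a) = π (v a)) ∧ (∀ x, ∃ a, v a = π x) ∧
      (∀ a, ∃ x, v a = π x) ∧ (∃ N, ∀ w, τ^[N] w = 0) ∧ (∀ w, (p : ℤ) • w = ε • τ w) := by
  letI : CommGroup π.range :=
    { (inferInstance : Group π.range) with
      mul_comm := by
        rintro ⟨_, x, rfl⟩ ⟨y, hy⟩
        apply Subtype.ext
        exact h.central x y }
  let τm : π.range →* π.range := π.rangeRestrict.comp π.range.subtype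
  let τ : Additive π.range →+ Additive π.range := MonoidHom.toAdditive τm
  let v : Additive π.range → G := fun a => (Additive.toMul a : π.range)
  have hτ : ∀ a, v (τ a) = π (v a) := fun a => rfl
  have hz : ∀ (n : ℤ) a, v (n • a) = v a ^ n := fun n a => rfl
  have hinj : Function.Injective v := by
    intro a b hab
    exact Subtype.ext hab
  have hit : ∀ (j : ℕ) a, v (τ^[j] a) = π^[j] (v a) := by
    intro j
    induction j with
    | zero => intro a; rfl
    | succ j ih => intro a; rw [Function.iterate_succ_apply, Function.iterate_succ_apply, ih, hτ]
  refine ⟨Additive π.range, inferInstance, inferInstanceAs (Finite π.range), τ, v, fun a b => rfl,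
    hz, hinj, hτ, ?_, ?_, ?_, ?_⟩
  · intro x
    exact ⟨Additive.ofMul ⟨π x, x, rfl⟩, rfl⟩
  · rintro ⟨_, x, rfl⟩
    exact ⟨x, rfl⟩
  · obtain ⟨N, hN⟩ := h.nil
    refine ⟨N, fun w => hinj ?_⟩
    rw [hit, hN]
    rfl
  · intro w
    apply hinj
    rw [hz, hz, hτ, zpow_natCast]
    exact h.pow _

/-- Digit package. -/
structure Dig (p : ℕ) (ε : ℤ) (G : Type) [Group G] (π : G →* G) (ι : Type) where
  e : ι → ℕ
  B : (ι → ℕ → ℤ) → G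
  B_add : ∀ a b, B (a + b) = B a * B b
  B_zsmul : ∀ (n : ℤ) a, B (n • a) = B a ^ n
  B_comm : ∀ a x, B a * x = x * B a
  B_mem : ∀ a, ∃ x, B a = π x
  B_sh : ∀ a, B (shA a) = π (B a)
  B_congr : ∀ {a b}, (∀ i, ∀ j < e i, a i j = b i j) → B a = B b
  indep : ∀ a : ι → ℕ → ℤ, (∀ i j, |a i j| < p) → B a = 1 → ∀ i, ∀ j < e i, a i j = 0
  surj : ∀ x, ∃ a : ι → ℕ → ℤ, (∀ i j, 0 ≤ a i j ∧ a i j < p) ∧ B a = π x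

theorem exists_dig {p : ℕ} (hp : p.Prime) {ε : ℤ} {G : Type} [Group G] [Finite G] {π : G →* G}
    (h : Dat p ε G π) : ∃ ι, Nonempty (Dig p ε G π ι) := by
  haveI := Fact.mk hp
  obtain ⟨W, _, _, τ, v, vadd, vz, vinj, vτ, vs, vm, ⟨N, hN⟩, hpw⟩ := frame h
  obtain ⟨ι, _, e, w, he, hw, hspan, hind⟩ := jordan ε N W τ hN hpw
  have v0 : v 0 = 1 := by
    have := vadd 0 0
    rw [add_zero] at this
    exact left_eq_mul.mp this
  refine ⟨ι, ⟨⟨e, fun a => v (ev τ e w a), ?_, ?_, ?_, ?_, ?_, ?_, ?_, ?_⟩⟩⟩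
  · intro a b
    rw [ev_add, vadd]
  · intro n a
    rw [ev_smul, vz]
  · intro a x
    obtain ⟨y, hy⟩ := vm (ev τ e w a)
    rw [hy, h.central]
  · intro a
    exact vm _
  · intro a
    rw [ev_sh τ e w hw, vτ]
  · intro a b hab
    rw [ev_congr τ e w hab]
  · intro a ha h1
    rw [← v0] at h1
    exact hind a ha (vinj h1)
  · intro x
    obtain ⟨y, hy⟩ := vs x
    obtain ⟨a, ha⟩ := hspan y
    refine ⟨fun i => red p ε (a i), fun i j => red_mem hp.pos _ _ _, ?_⟩
    rw [ev_red τ e w hw hpw, ha, hy]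

theorem splitting {p : ℕ} (hp : p.Prime) {ε : ℤ} {G : Type} [Group G] [Finite G] {π : G →* G}
    (h : Dat p ε G π) {Y : Type} [CommGroup Y] (τY : Y →* Y) (hY : ∀ y, y ^ p = τY y ^ ε)
    (s : G → Y) (hs : ∀ x, s (π x) = τY (s x)) (hs1 : ∀ x, π x = 1 → s x = 1)
    (q : Y →* G) (hqs : ∀ x, q (s x) = π x) :
    ∃ S : G →* Y, (∀ x, q (S x) = π x) ∧ (∀ x, S (π x) = τY (S x)) ∧ (∀ x, π x = 1 → S x = 1) := by
  haveI := Fact.mk hp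
  obtain ⟨W, _, _, τ, v, vadd, vz, vinj, vτ, vs, vm, ⟨N, hN⟩, hpw⟩ := frame h
  obtain ⟨ι, _, e, w, he, hw, hspan, hind⟩ := jordan ε N W τ hN hpw
  have v0 : v 0 = 1 := by
    have := vadd 0 0
    rw [add_zero] at this
    exact left_eq_mul.mp this
  have vit : ∀ (j : ℕ) a, v (τ^[j] a) = π^[j] (v a) := by
    intro j
    induction j with
    | zero => intro a; rfl
    | succ j ih => intro a; rw [Function.iterate_succ_apply, Function.iterate_succ_apply, ih, vτ]
  have hu : ∀ i, ∃ u, v (w i) = π u := fun i => vm _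
  choose u hu using hu
  let t : Additive Y →+ Additive Y := MonoidHom.toAdditive τY
  let y : ι → Additive Y := fun i => Additive.ofMul (s (u i))
  have hit : ∀ (j : ℕ) x, t^[j] (Additive.ofMul (s x)) = Additive.ofMul (s (π^[j] x)) := by
    intro j
    induction j with
    | zero => intro x; rfl
    | succ j ih =>
      intro x
      rw [Function.iterate_succ_apply, Function.iterate_succ_apply, ← ih, hs]
      rfl
  have hy : ∀ i, t^[e i] (y i) = 0 := by
    intro i
    rw [hit, hs1]
    · rfl
    · have := vit (e i) (w i)
      rw [hw, v0, hu, ← Function.iterate_succ_apply, Function.iterate_succ_apply'] at this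
      exact this.symm
  have hpt : ∀ y : Additive Y, (p : ℤ) • y = ε • t y := by
    intro y
    rw [natCast_zsmul]
    exact hY (Additive.toMul y)
  have hwd : ∀ a, ev τ e w a = 0 → ev t e y a = 0 := by
    intro a ha
    rw [← ev_red τ e w hw hpw] at ha
    rw [← ev_red t e y hy hpt, ← ev_zero t e y]
    apply ev_congr
    apply hind _ _ ha
    intro i j
    have := red_mem hp.pos ε (a i) j
    rw [abs_of_nonneg this.1]
    exact this.2
  have hwd2 : ∀ a b, ev τ e w a = ev τ e w b → ev t e y a = ev t e y b := by
    intro a b hab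
    have := hwd (a + (-1 : ℤ) • b) (by rw [ev_add, ev_smul, hab]; simp)
    rw [ev_add, ev_smul] at this
    simpa [add_neg_eq_zero] using this
  have hx : ∀ x, ∃ a, v (ev τ e w a) = π x := by
    intro x
    obtain ⟨z, hz⟩ := vs x
    obtain ⟨a, ha⟩ := hspan z
    exact ⟨a, by rw [ha, hz]⟩
  choose A hA using hx
  let S : G → Y := fun x => Additive.toMul (ev t e y (A x))
  have hS : ∀ x a, v (ev τ e w a) = π x → S x = Additive.toMul (ev t e y a) := by
    intro x a hxa
    rw [← hA] at hxa
    change Additive.toMul _ = _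
    rw [hwd2 _ _ (vinj hxa)]
  have vsum : ∀ a, v (ev τ e w a) = q (Additive.toMul (ev t e y a)) := by
    let r : W → Additive Y → Prop := fun b c => v b = q (Additive.toMul c)
    have hr : ∀ b c b' c', r b c → r b' c' → r (b + b') (c + c') := by
      intro b c b' c' h1 h2
      change v (b + b') = q (Additive.toMul c * Additive.toMul c')
      rw [vadd, map_mul, h1, h2]
    have hr0 : r 0 0 := by
      change v 0 = q 1
      rw [v0, map_one]
    have hqi : ∀ (j : ℕ) x, q (s (π^[j] x)) = π^[j] (π x) := by
      intro j x
      rw [hqs, ← Function.iterate_succ_apply, Function.iterate_succ_apply']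
    intro a
    refine Finset.sum_hom_rel (r := r) hr0 (fun i b c hbc => hr _ _ _ _ ?_ hbc)
    refine Finset.sum_hom_rel (r := r) hr0 (fun j b c hbc => hr _ _ _ _ ?_ hbc)
    change v _ = q _
    rw [hit, vz, vit, hu, ← hqi, toMul_zsmul, map_zpow]
    rfl
  refine ⟨MonoidHom.mk' S ?_, ?_, ?_, ?_⟩
  · intro x x'
    rw [hS (x * x') (A x + A x')]
    · rw [ev_add]; rfl
    · rw [ev_add, vadd, hA, hA, map_mul]
  · intro x
    rw [← hA x]
    exact (vsum _).symm
  · intro x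
    change S (π x) = τY (S x)
    rw [hS (π x) (shA (A x))]
    · rw [ev_sh t e y hy]; rfl
    · rw [ev_sh τ e w hw, vτ, hA]
  · intro x hx
    change S x = 1
    rw [hS x 0]
    · rw [ev_zero]; rfl
    · rw [ev_zero, v0, hx]

end CF

namespace CF

/-- The linking relation between two groups with endomorphisms. -/
structure Link {G G' : Type} [Group G] [Group G'] (π : G →* G) (π' : G' →* G') (f : G ≃ G') :
    Prop where
  comp : ∀ x, f (π x) = π' (f x)
  cos : ∀ x y, (∃ t, y = x * π t) ↔ ∃ t, f y = f x * π' t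
  hom : ∀ x y, ∃ t, f x * f y = f (x * y) * π' t
  ker : ∀ x z, π z = 1 → f (x * z) = f x * f z
  comm : ∀ x y, f ⁅x, y⁆ = ⁅f x, f y⁆

theorem Link.one {G G' : Type} [Group G] [Group G'] {π : G →* G} {π' : G' →* G'} {f : G ≃ G'}
    (h : Link π π' f) : f 1 = 1 := by
  have := h.ker 1 1 (map_one π)
  rw [mul_one] at this
  exact left_eq_mul.mp this

theorem Link.trans {G G' G'' : Type} [Group G] [Group G'] [Group G''] {π : G →* G} {π' : G' →* G'}
    {π'' : G'' →* G''} {f : G ≃ G'} {g : G' ≃ G''}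
    (h : Link π π' f) (h' : Link π' π'' g) : Link π π'' (f.trans g) where
  comp x := by simp [h.comp, h'.comp]
  cos x y := by rw [h.cos, h'.cos]; rfl
  hom x y := by
    obtain ⟨t, ht⟩ := h.hom x y
    obtain ⟨t', ht'⟩ := h'.hom (f x) (f y)
    obtain ⟨t'', ht''⟩ := (h'.cos _ _).mp ⟨t, ht⟩
    refine ⟨t'' * t', ?_⟩
    simp only [Equiv.trans_apply]
    rw [ht', ht'', map_mul π'', mul_assoc]
  ker x z hz := by
    simp only [Equiv.trans_apply]
    rw [h.ker x z hz, h'.ker]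
    rw [← h.comp, hz, h.one]
  comm x y := by simp [h.comm, h'.comm]

theorem Link.symm {G G' : Type} [Group G] [Group G'] {π : G →* G} {π' : G' →* G'} {f : G ≃ G'}
    (h : Link π π' f) : Link π' π f.symm where
  comp x := by
    apply f.injective
    rw [h.comp]
    simp
  cos x y := by rw [h.cos]; simp
  hom x y := by
    obtain ⟨t, ht⟩ := h.hom (f.symm x) (f.symm y)
    rw [f.apply_symm_apply, f.apply_symm_apply] at ht
    obtain ⟨t', ht'⟩ := (h.cos (f.symm x * f.symm y) (f.symm (x * y))).mpr
      ⟨t, by rw [f.apply_symm_apply, ht]⟩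
    refine ⟨t'⁻¹, ?_⟩
    rw [ht', map_inv, mul_inv_cancel_right]
  ker x z hz := by
    apply f.injective
    rw [h.ker]
    · simp
    · apply f.injective
      rw [h.comp, f.apply_symm_apply, hz, h.one]
  comm x y := by
    apply f.injective
    rw [h.comm]
    simp

theorem Link.ofIso {G G' : Type} [Group G] [Group G'] {π : G →* G} {π' : G' →* G'} (f : G ≃* G')
    (h : ∀ x, f (π x) = π' (f x)) : Link π π' f.toEquiv where
  comp := h
  cos x y := by
    constructor
    · rintro ⟨t, rfl⟩
      exact ⟨f t, by simp [h]⟩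
    · rintro ⟨t, ht⟩
      refine ⟨f.symm t, f.injective ?_⟩
      rw [map_mul, h]
      simpa using ht
  hom x y := ⟨1, by simp⟩
  ker x z _ := by simp
  comm x y := by simp [commutatorElement_def]

namespace Dig

variable {p : ℕ} {ε : ℤ} {G : Type} [Group G] {π : G →* G} {ι : Type} (Q : Dig p ε G π ι)

/-- The digits of `π x`. -/
noncomputable def d (x : G) : ι → ℕ → ℤ := Classical.choose (Q.surj x)

theorem d_mem (x : G) (i : ι) (j : ℕ) : 0 ≤ Q.d x i j ∧ Q.d x i j < p :=
  (Classical.choose_spec (Q.surj x)).1 i j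

theorem B_d (x : G) : Q.B (Q.d x) = π x := (Classical.choose_spec (Q.surj x)).2

theorem B_zero : Q.B 0 = 1 := by
  have := Q.B_zsmul 0 0
  simpa using this

theorem d_unique {x : G} {a : ι → ℕ → ℤ} (ha : ∀ i j, 0 ≤ a i j ∧ a i j < p) (h : Q.B a = π x) :
    ∀ i, ∀ j < Q.e i, Q.d x i j = a i j := by
  intro i j hj
  have := Q.indep (Q.d x + (-1 : ℤ) • a) (by
    intro i j
    have h1 := ha i j
    have h2 := Q.d_mem x i j
    simp only [Pi.add_apply, Pi.smul_apply, smul_eq_mul]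
    rw [abs_lt]
    constructor <;> linarith) (by
    rw [Q.B_add, Q.B_zsmul, Q.B_d, h]; simp) i j hj
  simp only [Pi.add_apply, Pi.smul_apply, smul_eq_mul] at this
  linarith

/-- The correction term. -/
noncomputable def C (ε' : ℤ) (a : ι → ℕ → ℤ) : G := Q.B ((ε' - ε) • fun i => carry p ε' (a i))

theorem C_comm (ε' : ℤ) (a : ι → ℕ → ℤ) (x : G) : Q.C ε' a * x = x * Q.C ε' a := Q.B_comm _ _


theorem C_congr (hp : 0 < p) (ε' : ℤ) {a b : ι → ℕ → ℤ} (h : ∀ i, ∀ j < Q.e i, a i j = b i j) : Q.C ε' a = Q.C ε' b := by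
  apply Q.B_congr
  intro i j hj
  simp only [Pi.smul_apply]
  rw [carry_congr hp (h i) j hj]

theorem C_small (hp : 0 < p) (ε' : ℤ) {a : ι → ℕ → ℤ} (h : ∀ i, ∀ j < Q.e i, 0 ≤ a i j ∧ a i j < p) : Q.C ε' a = 1 := by
  rw [← Q.B_zero]
  apply Q.B_congr
  intro i j hj
  simp only [Pi.smul_apply]
  rw [carry_small hp ε' (h i) j hj]
  simp

theorem C_add (hp : 0 < p) (ε' : ℤ) (s t : ι → ℕ → ℤ) :
    Q.C ε' (s + t) = Q.C ε' s * Q.C ε' ((fun i => red p ε' (s i)) + t) := by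
  rw [C, C, C, ← Q.B_add, ← smul_add]
  congr 2
  ext i j
  exact carry_add hp ε' (s i) (t i) j

theorem C_sh (hp : 0 < p) (ε' : ℤ) (s : ι → ℕ → ℤ) : Q.C ε' (shA s) = π (Q.C ε' s) := by
  rw [C, C, Q.B_zsmul, Q.B_zsmul, map_zpow, ← Q.B_sh]
  congr 2
  ext i j
  exact carry_sh hp ε' (s i) j

theorem B_red (_hp : 0 < p) (ε' : ℤ) (hpow : ∀ x, x ^ p = π x ^ ε) (s : ι → ℕ → ℤ) :
    Q.B (fun i => red p ε' (s i)) = Q.B s * π (Q.C ε' s) := by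
  let c : ι → ℕ → ℤ := fun i => carry p ε' (s i)
  have e1 : (fun i => red p ε' (s i)) = s + (ε' • shA c + (-(p : ℤ)) • c) := by
    ext i j
    simp only [Pi.add_apply, Pi.smul_apply, smul_eq_mul, red, shA, c]
    ring
  have e2 : Q.C ε' s = Q.B c ^ (ε' - ε) := Q.B_zsmul _ _
  rw [e1, Q.B_add, Q.B_add, Q.B_zsmul, Q.B_zsmul, Q.B_sh, e2, map_zpow, zpow_neg, zpow_natCast,
    hpow, zpow_sub]

theorem d_mul_C (hp : 0 < p) (ε' : ℤ) (hpow : ∀ x, x ^ p = π x ^ ε) {x : G} {s : ι → ℕ → ℤ} (h : Q.B s = π x) :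
    ∀ i, ∀ j < Q.e i, Q.d (x * Q.C ε' s) i j = red p ε' (s i) j := by
  apply Q.d_unique (a := fun i => red p ε' (s i))
  · intro i j
    exact red_mem hp _ _ _
  · rw [Q.B_red hp ε' hpow, h, map_mul]

end Dig

/-- The carrier of the twisted group. -/
structure Tw (G : Type) where
  val : G

theorem twist {p : ℕ} (hp : p.Prime) {ε : ℤ} {G : Type} [Group G] [Finite G] {π : G →* G}
    (h : Dat p ε G π) {ε' : ℤ} (hε' : ε' = 0 ∨ ε' = 1) :
    ∃ (G' : Type) (_ : Group G') (π' : G' →* G') (f : G ≃ G'), Dat p ε' G' π' ∧ Link π π' f := by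
  obtain ⟨ι, ⟨Q⟩⟩ := exists_dig hp h
  have hp0 := hp.pos
  let m : Tw G → Tw G → Tw G := fun x y => ⟨x.val * y.val * Q.C ε' (Q.d x.val + Q.d y.val)⟩
  have hBd : ∀ x y, Q.B (Q.d x + Q.d y) = π (x * y) := by
    intro x y
    rw [Q.B_add, Q.B_d, Q.B_d, map_mul]
  have hd0 : ∀ x, π x = 1 → ∀ i, ∀ j < Q.e i, Q.d x i j = 0 := by
    intro x hx
    refine Q.d_unique (a := 0) ?_ ?_
    · intro i j; simp [hp0]
    · rw [Q.B_zero, hx]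
  have hC0 : ∀ x z, π z = 1 → Q.C ε' (Q.d x + Q.d z) = 1 := by
    intro x z hz
    apply Q.C_small hp0
    intro i j hj
    have := hd0 z hz i j hj
    simp only [Pi.add_apply, this, add_zero]
    exact Q.d_mem x i j
  have hC0' : ∀ x z, π z = 1 → Q.C ε' (Q.d z + Q.d x) = 1 := by
    intro x z hz
    rw [add_comm]; exact hC0 x z hz
  have key : ∀ (x z : G) (s : ι → ℕ → ℤ), Q.B s = π x →
      x * Q.C ε' s * z * Q.C ε' (Q.d (x * Q.C ε' s) + Q.d z) = x * z * Q.C ε' (s + Q.d z) := by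
    intro x z s hs
    have e1 : Q.C ε' (Q.d (x * Q.C ε' s) + Q.d z) =
        Q.C ε' ((fun i => red p ε' (s i)) + Q.d z) := by
      apply Q.C_congr hp0
      intro i j hj
      simp only [Pi.add_apply]
      rw [Q.d_mul_C hp0 ε' h.pow hs i j hj]
    rw [e1, Q.C_add hp0 ε' s, mul_assoc x, Q.C_comm]
    simp only [mul_assoc]
  have key' : ∀ (x z : G) (s : ι → ℕ → ℤ), Q.B s = π x →
      z * (x * Q.C ε' s) * Q.C ε' (Q.d z + Q.d (x * Q.C ε' s)) = z * x * Q.C ε' (s + Q.d z) := by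
    intro x z s hs
    have e1 : Q.C ε' (Q.d z + Q.d (x * Q.C ε' s)) =
        Q.C ε' ((fun i => red p ε' (s i)) + Q.d z) := by
      apply Q.C_congr hp0
      intro i j hj
      simp only [Pi.add_apply]
      rw [Q.d_mul_C hp0 ε' h.pow hs i j hj, add_comm]
    rw [e1, Q.C_add hp0 ε' s]
    simp only [mul_assoc]
  letI : Mul (Tw G) := ⟨m⟩
  letI : One (Tw G) := ⟨⟨1⟩⟩
  letI : Inv (Tw G) := ⟨fun x => ⟨x.val⁻¹ * Q.C ε' (-Q.d x.val)⟩⟩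
  have hmul : ∀ x y : G, (⟨x⟩ : Tw G) * ⟨y⟩ = ⟨x * y * Q.C ε' (Q.d x + Q.d y)⟩ := fun x y => rfl
  letI gi : Group (Tw G) := Group.ofLeftAxioms (by
    rintro ⟨x⟩ ⟨y⟩ ⟨z⟩
    rw [hmul, hmul, hmul, hmul]
    congr 1
    rw [key _ _ _ (hBd x y), key' _ _ _ (hBd y z), mul_assoc x y z]
    congr 2
    abel) (by
    rintro ⟨x⟩
    change (⟨1⟩ : Tw G) * ⟨x⟩ = _
    rw [hmul, hC0' _ _ (map_one π)]
    simp) (by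
    rintro ⟨x⟩
    change (⟨x⁻¹ * Q.C ε' (-Q.d x)⟩ : Tw G) * ⟨x⟩ = ⟨1⟩
    rw [hmul]
    congr 1
    rw [key]
    · rw [neg_add_cancel, inv_mul_cancel, one_mul]
      apply Q.C_small hp0
      intro i j _
      simp [hp0]
    · have : -Q.d x = (-1 : ℤ) • Q.d x := by simp
      rw [this, Q.B_zsmul, Q.B_d]
      simp)
  have hone : (1 : Tw G) = ⟨1⟩ := rfl
  have hpow : ∀ (x : G) (k : ℕ), (⟨x⟩ : Tw G) ^ k = ⟨x ^ k * Q.C ε' ((k : ℤ) • Q.d x)⟩ := by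
    intro x k
    induction k with
    | zero =>
      rw [pow_zero, hone]
      congr 1
      rw [pow_zero, one_mul]
      symm
      apply Q.C_small hp0
      intro i j _
      simp [hp0]
    | succ k ih =>
      rw [pow_succ, ih, hmul, key]
      · rw [pow_succ]
        congr 3
        push_cast
        rw [add_smul, one_smul]
      · rw [Q.B_zsmul, Q.B_d, map_pow, zpow_natCast]
  have hdπ : ∀ x, ∀ i, ∀ j < Q.e i, Q.d (π x) i j = shA (Q.d x) i j := by
    intro x
    apply Q.d_unique
    · intro i j
      exact sh_mem hp0 (Q.d_mem x i) j
    · rw [Q.B_sh, Q.B_d]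
  let π' : Tw G →* Tw G := MonoidHom.mk' (fun x => ⟨π x.val⟩) (by
    rintro ⟨x⟩ ⟨y⟩
    rw [hmul, hmul]
    simp only [map_mul]
    congr 2
    rw [← Q.C_sh hp0]
    apply Q.C_congr hp0
    intro i j hj
    simp only [Pi.add_apply]
    rw [hdπ x i j hj, hdπ y i j hj]
    exact sh_add _ _ _)
  have hπ' : ∀ x, π' ⟨x⟩ = ⟨π x⟩ := fun x => rfl
  have hCmem : ∀ s, ∃ t, Q.C ε' s = π t := fun s => Q.B_mem _
  let f : G ≃ Tw G := ⟨Tw.mk, Tw.val, fun _ => rfl, fun _ => rfl⟩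
  have hf : ∀ x, f x = ⟨x⟩ := fun x => rfl
  have hcos : ∀ x y, (∃ t, y = x * π t) ↔ ∃ t, f y = f x * π' t := by
    intro x y
    constructor
    · rintro ⟨t, rfl⟩
      obtain ⟨⟨z⟩, hz⟩ : ∃ z : Tw G, f (x * π t) = f x * z := ⟨(f x)⁻¹ * f (x * π t), by simp⟩
      obtain ⟨t', ht'⟩ := hCmem (Q.d x + Q.d z)
      have h1 : x * π t = x * z * π t' := by
        rw [← ht']
        exact congrArg Tw.val hz
      refine ⟨⟨t * t'⁻¹⟩, ?_⟩
      rw [hz, hπ']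
      congr 2
      rw [mul_assoc] at h1
      rw [mul_left_cancel h1 |> eq_mul_inv_of_mul_eq ∘ Eq.symm, map_mul, map_inv]
    · rintro ⟨⟨t⟩, ht⟩
      obtain ⟨t', ht'⟩ := hCmem (Q.d x + Q.d (π t))
      refine ⟨t * t', ?_⟩
      have := congrArg Tw.val ht
      change y = x * π t * Q.C ε' (Q.d x + Q.d (π t)) at this
      rw [this, ht', map_mul, mul_assoc]
  refine ⟨Tw G, gi, π', f, ⟨?_, ?_, ?_⟩, ⟨fun x => rfl, hcos, ?_, ?_, ?_⟩⟩
  · rintro ⟨x⟩ ⟨y⟩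
    rw [hπ', hmul, hmul, h.central, add_comm]
  · obtain ⟨N, hN⟩ := h.nil
    refine ⟨N, ?_⟩
    have : ∀ (j : ℕ) x, π'^[j] ⟨x⟩ = ⟨π^[j] x⟩ := by
      intro j
      induction j with
      | zero => intro x; rfl
      | succ j ih => intro x; rw [Function.iterate_succ_apply, Function.iterate_succ_apply, hπ', ih]
    rintro ⟨x⟩
    rw [this, hN]
    rfl
  · rintro ⟨x⟩
    have e1 : Q.C ε' ((p : ℤ) • Q.d x) = π x ^ (ε' - ε) := by
      rw [← Q.B_d, ← Q.B_zsmul, Dig.C]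
      congr 2
      ext i j
      rw [← carry_p hp0 hε' (Q.d_mem x i) j]
      simp
    rw [hpow, e1, h.pow, ← zpow_add, add_sub_cancel, hπ']
    rcases hε' with rfl | rfl
    · rw [zpow_zero, zpow_zero]; rfl
    · rw [zpow_one, zpow_one]
  · intro x y
    obtain ⟨t, ht⟩ := hCmem (Q.d x + Q.d y)
    exact (hcos (x * y) (x * y * Q.C ε' (Q.d x + Q.d y))).mp ⟨t, by rw [ht]⟩
  · intro x z hz
    rw [hf, hf, hf, hmul, hC0 _ _ hz, mul_one]
  · intro x y
    have hc : π ⁅x, y⁆ = 1 := by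
      rw [map_commutatorElement, commutatorElement_eq_one_iff_mul_comm]
      exact h.central _ _
    have e1 : f ⁅x, y⁆ * (f y * f x) = f x * f y := by
      rw [hf, hf, hf, hmul, hmul, hmul, hC0' _ _ hc, add_comm (Q.d x)]
      congr 1
      rw [mul_one, ← mul_assoc]
      congr 1
      rw [commutatorElement_def]
      group
    rw [commutatorElement_def (f x), eq_mul_inv_iff_mul_eq, eq_mul_inv_iff_mul_eq, mul_assoc, e1]

end CF

namespace CF

theorem transport {p : ℕ} (hp : p.Prime) {ε : ℤ} {G G1 : Type} [Group G] [Group G1] [Finite G]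
    {π : G →* G} {π1 : G1 →* G1} (hG : Dat p ε G π) (hG1 : Dat p ε G1 π1) {k : G ≃ G1}
    (hk : Link π π1 k) : ∃ h : G ≃* G1, ∀ x, h (π x) = π1 (h x) := by
  have k1 := hk.one
  let D : Subgroup (G × G1) :=
    { carrier := {d | ∃ t, d.2 = k d.1 * π1 t}
      one_mem' := ⟨1, by simp [k1]⟩
      mul_mem' := by
        rintro ⟨x, y⟩ ⟨x', y'⟩ ⟨t, ht⟩ ⟨t', ht'⟩
        obtain ⟨s, hs⟩ := hk.hom x x'
        refine ⟨s * (t * t'), ?_⟩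
        simp only at ht ht'
        simp only [Prod.mk_mul_mk]
        rw [ht, ht', map_mul π1, map_mul π1, ← mul_assoc _ (π1 s), ← hs]
        simp only [mul_assoc]
        congr 1
        rw [← mul_assoc, hG1.central, mul_assoc]
      inv_mem' := by
        rintro ⟨x, y⟩ ⟨t, ht⟩
        obtain ⟨s, hs⟩ := hk.hom x x⁻¹
        rw [mul_inv_cancel, k1, one_mul] at hs
        refine ⟨s⁻¹ * t⁻¹, ?_⟩
        simp only at ht
        simp only [Prod.inv_mk]
        rw [ht, map_mul π1, map_inv π1, map_inv π1, ← hs, mul_inv_rev, mul_inv_rev, ← mul_assoc,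
          mul_inv_cancel_left, ← map_inv π1, hG1.central] }
  have hD : ∀ x y, (x, y) ∈ D ↔ ∃ t, y = k x * π1 t := fun x y => Iff.rfl
  have hDk : ∀ x, (x, k x) ∈ D := fun x => ⟨1, by simp⟩
  let N : Subgroup D :=
    { carrier := {d | π d.1.1 = 1 ∧ d.1.2 = k d.1.1}
      one_mem' := by
        refine ⟨map_one π, k1.symm⟩
      mul_mem' := by
        rintro ⟨⟨x, y⟩, h1⟩ ⟨⟨x', y'⟩, h2⟩ ⟨h3, h4⟩ ⟨h5, h6⟩
        simp only at h3 h4 h5 h6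
        refine ⟨?_, ?_⟩
        · change π (x * x') = 1
          rw [map_mul, h3, h5, one_mul]
        · change y * y' = k (x * x')
          rw [hk.ker _ _ h5, h4, h6]
      inv_mem' := by
        rintro ⟨⟨x, y⟩, h1⟩ ⟨h3, h4⟩
        simp only at h3 h4
        refine ⟨?_, ?_⟩
        · change π (x⁻¹) = 1
          rw [map_inv, h3, inv_one]
        · change y⁻¹ = k (x⁻¹)
          rw [inv_eq_iff_mul_eq_one, h4]
          have e0 := hk.ker x x⁻¹ (by rw [map_inv, h3, inv_one])
          rw [← e0, mul_inv_cancel, k1] }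
  have hN : ∀ x y (h : (x, y) ∈ D), (⟨(x, y), h⟩ : D) ∈ N ↔ π x = 1 ∧ y = k x :=
    fun x y h => Iff.rfl
  have hcomm : ∀ (x x' : G) (y y' : G1), (x, y) ∈ D → (x', y') ∈ D → ⁅y, y'⁆ = k ⁅x, x'⁆ := by
    rintro x x' y y' ⟨t, ht⟩ ⟨t', ht'⟩
    simp only at ht ht'
    rw [hk.comm, ht, ht', commutatorElement_def, commutatorElement_def]
    simp only [mul_inv_rev]
    have c1 := hG1.central t
    have c2 := hG1.central t'
    calc k x * π1 t * (k x' * π1 t') * ((π1 t)⁻¹ * (k x)⁻¹) * ((π1 t')⁻¹ * (k x')⁻¹)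
        = k x * (π1 t * (k x' * π1 t')) * (π1 t)⁻¹ * (k x)⁻¹ * (π1 t')⁻¹ * (k x')⁻¹ := by
          simp only [mul_assoc]
      _ = k x * k x' * (π1 t' * (k x)⁻¹) * (π1 t')⁻¹ * (k x')⁻¹ := by
          rw [c1]; group
      _ = _ := by rw [c2]; group
  have hπc : ∀ x x' : G, π ⁅x, x'⁆ = 1 := by
    intro x x'
    rw [map_commutatorElement, commutatorElement_eq_one_iff_mul_comm]
    exact hG.central _ _
  have hcN : ∀ d d' : D, ⁅d, d'⁆ ∈ N := by
    rintro ⟨⟨x, y⟩, h1⟩ ⟨⟨x', y'⟩, h2⟩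
    exact ⟨hπc x x', hcomm _ _ _ _ h1 h2⟩
  haveI : N.Normal := by
    refine ⟨fun n hn g => ?_⟩
    have : g * n * g⁻¹ = ⁅g, n⁆ * n := by rw [commutatorElement_def]; group
    rw [this]
    exact N.mul_mem (hcN _ _) hn
  letI : CommGroup (D ⧸ N) :=
    { (inferInstance : Group (D ⧸ N)) with
      mul_comm := by
        intro a b
        induction a using QuotientGroup.induction_on with | H a => ?_
        induction b using QuotientGroup.induction_on with | H b => ?_
        change ((a * b : D) : D ⧸ N) = ((b * a : D) : D ⧸ N)
        rw [QuotientGroup.eq]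
        have : (a * b)⁻¹ * (b * a) = ⁅b⁻¹, a⁻¹⁆ := by rw [commutatorElement_def]; group
        rw [this]
        exact hcN _ _ }
  let τD : D →* D := MonoidHom.mk' (fun d => ⟨(π d.1.1, π1 d.1.2), by
      obtain ⟨⟨x, y⟩, t, ht⟩ := d
      refine ⟨π1 t, ?_⟩
      simp only at ht
      simp only
      rw [ht, map_mul π1, hk.comp]⟩) (by
      rintro ⟨⟨x, y⟩, h1⟩ ⟨⟨x', y'⟩, h2⟩
      apply Subtype.ext
      simp)
  let τY : (D ⧸ N) →* (D ⧸ N) := QuotientGroup.map N N τD (by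
    rintro ⟨⟨x, y⟩, h1⟩ ⟨h2, h3⟩
    simp only at h2 h3
    refine ⟨?_, ?_⟩
    · change π (π x) = 1
      rw [h2, map_one]
    · change π1 y = k (π x)
      rw [h3, hk.comp])
  have hτY : ∀ d : D, τY (d : D ⧸ N) = ((τD d : D) : D ⧸ N) := fun d => rfl
  let s : G → D ⧸ N := fun x => ((⟨(x, k x), hDk x⟩ : D) : D ⧸ N)
  let qD : D →* G := π.comp ((MonoidHom.fst G G1).comp D.subtype)
  let q : (D ⧸ N) →* G := QuotientGroup.lift N qD (by
    rintro ⟨⟨x, y⟩, h1⟩ ⟨h2, h3⟩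
    exact h2)
  have hq : ∀ d : D, q (d : D ⧸ N) = π d.1.1 := fun d => rfl
  obtain ⟨S, hS1, hS2, hS3⟩ := splitting hp hG τY (by
    intro y
    induction y using QuotientGroup.induction_on with | H d => ?_
    rw [hτY]
    have : d ^ p = τD d ^ ε := by
      apply Subtype.ext
      apply Prod.ext
      · exact hG.pow _
      · exact hG1.pow _
    exact congrArg (QuotientGroup.mk' N) this) s (by
    intro x
    rw [hτY]
    change (QuotientGroup.mk _ : D ⧸ N) = _
    congr 1
    apply Subtype.ext
    exact Prod.ext rfl (hk.comp x)) (by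
    intro x hx
    refine (QuotientGroup.eq_one_iff _).mpr ⟨hx, rfl⟩) q (fun x => rfl)
  have hex : ∀ x, ∃ y, ∃ h : (x, y) ∈ D, ((⟨(x, y), h⟩ : D) : D ⧸ N) = S x := by
    intro x
    obtain ⟨⟨⟨x', y'⟩, h'⟩, hd⟩ := QuotientGroup.mk_surjective (S x)
    have h1 := hS1 x
    rw [← hd, hq] at h1
    simp only at h1
    have hz : π (x'⁻¹ * x) = 1 := by rw [map_mul, map_inv, h1, inv_mul_cancel]
    have hm := D.mul_mem h' (hDk (x'⁻¹ * x))
    rw [Prod.mk_mul_mk, mul_inv_cancel_left] at hm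
    refine ⟨_, hm, ?_⟩
    rw [← hd]
    symm
    rw [QuotientGroup.eq]
    have : (⟨(x', y'), h'⟩ : D)⁻¹ * ⟨_, hm⟩ = ⟨_, hDk (x'⁻¹ * x)⟩ := by
      apply Subtype.ext
      apply Prod.ext
      · rfl
      · exact inv_mul_cancel_left _ _
    rw [this]
    exact ⟨hz, rfl⟩
  choose f hfD hf using hex
  have huniq : ∀ x y (h : (x, y) ∈ D), ((⟨(x, y), h⟩ : D) : D ⧸ N) = S x → f x = y := by
    intro x y h hxy
    rw [← hf, QuotientGroup.eq] at hxy
    have h1 : y⁻¹ * f x = k (x⁻¹ * x) := hxy.2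
    rw [inv_mul_cancel, k1] at h1
    exact (inv_mul_eq_one.mp h1).symm
  have hfmul : ∀ x x', f (x * x') = f x * f x' := by
    intro x x'
    apply huniq _ _ (D.mul_mem (hfD x) (hfD x'))
    rw [map_mul, ← hf, ← hf]
    rfl
  let F : G →* G1 := MonoidHom.mk' f hfmul
  have hFπ : ∀ x, F (π x) = π1 (F x) := by
    intro x
    apply huniq _ _ (τD ⟨_, hfD x⟩).2
    rw [hS2, ← hf]
    rfl
  have hker : ∀ x, π x = 1 → F x = 1 → x = 1 := by
    intro x hx hfx
    have h1 := hf x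
    rw [hS3 x hx, QuotientGroup.eq_one_iff] at h1
    have h2 : f x = k x := h1.2
    have h3 : k x = 1 := by rw [← h2]; exact hfx
    rw [← k1] at h3
    exact k.injective h3
  have hinj : Function.Injective F := by
    rw [injective_iff_map_eq_one]
    obtain ⟨M, hM⟩ := hG.nil
    have : ∀ (m : ℕ) x, π^[m] x = 1 → F x = 1 → x = 1 := by
      intro m
      induction m with
      | zero => intro x hx _; exact hx
      | succ m ih =>
        intro x hx hfx
        apply hker x _ hfx
        apply ih _ hx
        rw [hFπ, hfx, map_one]
    exact fun x => this M x (hM x)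
  have hbij : Function.Bijective F := by
    haveI : Finite G1 := Finite.of_equiv _ k
    exact (Nat.bijective_iff_injective_and_card F).mpr ⟨hinj, Nat.card_congr k⟩
  exact ⟨MulEquiv.ofBijective F hbij, hFπ⟩

end CF

namespace CF

theorem Dat.comm_ker {p : ℕ} {ε : ℤ} {G : Type} [Group G] {π : G →* G} (h : Dat p ε G π) (x y : G) :
    π ⁅x, y⁆ = 1 := by
  rw [map_commutatorElement, commutatorElement_eq_one_iff_mul_comm]
  exact h.central _ _

theorem good_dat {p n : ℕ} (hp : p.Prime) (hpn : n ≤ p) {G : Type} [Group G]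
    (hcard : Nat.card G = p ^ n) (hc : ∀ x y : G, ⁅x, y⁆ ^ p = 1) :
    ∃ π : G →* G, (∀ x, π x = x ^ p) ∧ Dat p 1 G π ∧ ∀ x, π^[n] x = 1 := by
  let π : G →* G := MonoidHom.mk' (fun x => x ^ p) (power_hom hp n G hcard hpn hc)
  have hπ : ∀ x, π x = x ^ p := fun x => rfl
  have hit : ∀ (j : ℕ) x, π^[j] x = x ^ p ^ j := by
    intro j
    induction j with
    | zero => intro x; simp
    | succ j ih => intro x; rw [Function.iterate_succ_apply, ih, hπ, ← pow_mul, pow_succ']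
  have hn : ∀ x, π^[n] x = 1 := by
    intro x
    rw [hit, ← hcard, pow_card_eq_one']
  refine ⟨π, hπ, ⟨?_, ⟨n, hn⟩, ?_⟩, hn⟩
  · intro x y
    have h1 : π (y * x * y⁻¹) = π x := by
      have : y * x * y⁻¹ = ⁅y, x⁆ * x := by rw [commutatorElement_def]; group
      rw [this, map_mul, hπ ⁅y, x⁆, hc, one_mul]
    rw [hπ, conj_pow, ← hπ x] at h1
    exact (mul_inv_eq_iff_eq_mul.mp h1).symm
  · intro x
    rw [zpow_one, hπ]

theorem quot_equiv {A : Type 1} {B : Type} {r : A → A → Prop} {s : B → B → Prop}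
    (hr : Equivalence r) (hs : Equivalence s) (R : A → B → Prop) (h1 : ∀ a, ∃ b, R a b)
    (h2 : ∀ b, ∃ a, R a b) (h3 : ∀ a b a' b', R a b → R a' b' → (r a a' ↔ s b b')) :
    Nat.card (Quot r) = Nat.card (Quot s) := by
  choose F hF using h1
  let Φ : Quot r → Quot s := Quot.map F (fun a a' h => (h3 _ _ _ _ (hF a) (hF a')).mp h)
  apply Nat.card_eq_of_bijective Φ
  constructor
  · intro u v huv
    induction u using Quot.ind with | mk a => ?_
    induction v using Quot.ind with | mk a' => ?_
    change Quot.mk s (F a) = Quot.mk s (F a') at huv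
    rw [hs.quot_mk_eq_iff] at huv
    exact Quot.sound ((h3 _ _ _ _ (hF a) (hF a')).mpr huv)
  · intro v
    induction v using Quot.ind with | mk b => ?_
    obtain ⟨a, ha⟩ := h2 b
    exact ⟨Quot.mk r a, Quot.sound ((h3 _ _ _ _ (hF a) ha).mp (hr.refl a))⟩

theorem card_quot {X : Type} [Fintype X] {s : X → X → Prop} (hs : Equivalence s) :
    (Nat.card (Quot s) : ℚ) = ∑ x : X, (1 : ℚ) / Nat.card {y // s x y} := by
  classical
  haveI : Finite (Quot s) := Finite.of_surjective (Quot.mk s) Quot.mk_surjective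
  letI := Fintype.ofFinite (Quot s)
  rw [← Finset.sum_fiberwise (s := Finset.univ) (g := Quot.mk s)]
  rw [Nat.card_eq_fintype_card, ← Finset.card_univ, ← mul_one ((Finset.card _ : ℕ) : ℚ),
    ← nsmul_eq_mul, ← Finset.sum_const]
  refine Finset.sum_congr rfl (fun c _ => ?_)
  induction c using Quot.ind with | mk a => ?_
  have h : ∀ x ∈ Finset.univ.filter (fun x => Quot.mk s x = Quot.mk s a),
      (1 : ℚ) / Nat.card {y // s x y} =
        1 / (Finset.univ.filter (fun x => Quot.mk s x = Quot.mk s a)).card := by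
    intro x hx
    rw [Finset.mem_filter, hs.quot_mk_eq_iff] at hx
    congr 2
    rw [Nat.card_eq_fintype_card, Fintype.card_subtype]
    congr 1
    ext y
    rw [Finset.mem_filter, Finset.mem_filter, hs.quot_mk_eq_iff]
    exact ⟨fun h => ⟨h.1, hs.trans (hs.symm h.2) hx.2⟩,
      fun h => ⟨h.1, hs.trans hx.2 (hs.symm h.2)⟩⟩
  rw [Finset.sum_congr rfl h, Finset.sum_const, nsmul_eq_mul, mul_one_div, div_self]
  rw [Nat.cast_ne_zero]
  exact (Finset.card_pos.mpr ⟨a, by simp⟩).ne'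

theorem groupIsoRel_equiv (p n : ℕ) : Equivalence (groupIsoRel p n) := by
  refine ⟨fun q => ?_, ?_, ?_⟩
  · letI := q.1.2
    exact ⟨MulEquiv.refl _⟩
  · rintro q₁ q₂ ⟨h⟩
    letI := q₁.1.2
    letI := q₂.1.2
    exact ⟨h.symm⟩
  · rintro q₁ q₂ q₃ ⟨h⟩ ⟨h'⟩
    letI := q₁.1.2
    letI := q₂.1.2
    letI := q₃.1.2
    exact ⟨h.trans h'⟩

theorem main (p n : ℕ) (hp : p.Prime) (hn : 1 ≤ n) (hpn : n ≤ p)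
    (ι : Type) [Fintype ι] (E : ι → Type) [∀ i, Group (E i)]
    (hcard : ∀ i, Nat.card (E i) = p ^ n)
    (hexp : ∀ i, ∀ x : E i, x ^ p = 1)
    (htransv : ∀ i j : ι, Nonempty (E i ≃* E j) → i = j)
    (hcomplete : ∀ (G : Type) (_ : Group G), Nat.card G = p ^ n → (∀ x : G, x ^ p = 1) →
      Nontrivial G → ∃ i : ι, Nonempty (G ≃* E i)) :
    (Nat.card (Quot (groupIsoRel p n)) : ℚ) =
      ∑ i : ι, ∑ᶠ φ ∈ NSet n (E i), (1 : ℚ) / (Nat.card (autOrbit (E i) φ)) := by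
  classical
  have hpos : p ^ n ≠ 0 := pow_ne_zero _ hp.ne_zero
  haveI hfin : ∀ i, Finite (E i) := fun i => Nat.finite_of_card_ne_zero (by rw [hcard i]; exact hpos)
  haveI hfin2 : ∀ i, Finite (E i →* E i) := fun i => Finite.of_injective _ DFunLike.coe_injective
  letI hft : ∀ i, Fintype (NSet n (E i)) := fun i => Fintype.ofFinite _
  let X := Σ i, NSet n (E i)
  have hdat : ∀ x : X, Dat p 0 (E x.1) x.2.1 := by
    rintro ⟨i, φ, h1, h2⟩
    refine ⟨fun x y => ?_, ⟨n, h2⟩, fun x => ?_⟩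
    · exact (Subgroup.mem_center_iff.mp (h1 x) y).symm
    · rw [hexp, zpow_zero]
  let s : X → X → Prop := fun x y => ∃ h : E x.1 ≃* E y.1, ∀ t, h (x.2.1 t) = y.2.1 (h t)
  have hs : Equivalence s := by
    refine ⟨fun x => ⟨MulEquiv.refl _, fun t => rfl⟩, ?_, ?_⟩
    · rintro x y ⟨h, hh⟩
      refine ⟨h.symm, fun t => ?_⟩
      rw [MulEquiv.symm_apply_eq, hh, MulEquiv.apply_symm_apply]
    · rintro x y z ⟨h, hh⟩ ⟨h', hh'⟩
      refine ⟨h.trans h', fun t => ?_⟩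
      simp only [MulEquiv.trans_apply]
      rw [hh, hh']
  let R : GoodGroup p n → X → Prop := fun q x =>
    letI := q.1.2
    ∃ (π : q.1.1 →* q.1.1) (f : q.1.1 ≃ E x.1), (∀ t, π t = t ^ p) ∧ Dat p 1 q.1.1 π ∧
      Link π x.2.1 f
  have hq1 : ∀ q, ∃ x, R q x := by
    rintro ⟨⟨G, gG⟩, hG1, hG2⟩
    letI : Group G := gG
    haveI : Finite G := Nat.finite_of_card_ne_zero (by
      have : Nat.card G = p ^ n := hG1
      rw [this]; exact hpos)
    obtain ⟨π, hπ, hd, hnil⟩ := good_dat hp hpn hG1 hG2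
    obtain ⟨G', gG', π', f, hd', hl⟩ := twist hp hd (ε' := 0) (Or.inl rfl)
    have hc' : Nat.card G' = p ^ n := by rw [← Nat.card_congr f]; exact hG1
    haveI : Finite G' := Finite.of_equiv _ f
    obtain ⟨i, ⟨h⟩⟩ := hcomplete G' gG' hc' (fun x => by rw [hd'.pow, zpow_zero]) (by
      rw [← Finite.one_lt_card_iff_nontrivial, hc']
      exact Nat.one_lt_pow (by omega) hp.one_lt)
    let φ : E i →* E i := (h.toMonoidHom.comp π').comp h.symm.toMonoidHom
    have hφ : ∀ t, φ (h t) = h (π' t) := by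
      intro t
      change h (π' (h.symm (h t))) = _
      rw [h.symm_apply_apply]
    have hφN : φ ∈ NSet n (E i) := by
      constructor
      · intro x
        obtain ⟨t, rfl⟩ := h.surjective x
        rw [Subgroup.mem_center_iff]
        intro g
        obtain ⟨g, rfl⟩ := h.surjective g
        rw [hφ, ← map_mul, ← map_mul, hd'.central]
      · intro x
        obtain ⟨t, rfl⟩ := h.surjective x
        obtain ⟨u, rfl⟩ := f.surjective t
        have h1 : Function.Semiconj h π' φ := fun t => (hφ t).symm
        have h2 : Function.Semiconj f π π' := hl.comp
        rw [← (h1.iterate_right n).eq, ← (h2.iterate_right n).eq, hnil, hl.one, map_one]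
    exact ⟨⟨i, φ, hφN⟩, π, f.trans h.toEquiv, hπ, hd,
      hl.trans (Link.ofIso h (fun t => (hφ t).symm))⟩
  have hq2 : ∀ x, ∃ q, R q x := by
    intro x
    obtain ⟨G', gG', π', f, hd', hl⟩ := twist hp (hdat x) (ε' := 1) (Or.inr rfl)
    have hπ' : ∀ t, π' t = t ^ p := by
      intro t
      rw [hd'.pow, zpow_one]
    refine ⟨⟨⟨G', gG'⟩, ?_, ?_⟩, π', f.symm, hπ', hd', hl.symm⟩
    · rw [← hcard x.1]
      exact (Nat.card_congr f).symm
    · intro a b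
      refine (hπ' _).symm.trans (hd'.comm_ker a b)
  have hq3 : ∀ q x q' x', R q x → R q' x' → (groupIsoRel p n q q' ↔ s x x') := by
    rintro ⟨⟨G, gG⟩, hG1, hG2⟩ x ⟨⟨G', gG'⟩, hG1', hG2'⟩ x' ⟨π, f, hπ, hd, hl⟩ ⟨π', f', hπ', hd', hl'⟩
    haveI : Finite G := Finite.of_equiv _ f.symm
    constructor
    · rintro ⟨h⟩
      have hh : Link π π' h.toEquiv := Link.ofIso h (fun t => by rw [hπ, hπ', map_pow])
      obtain ⟨k, hk⟩ := transport hp (hdat x) (hdat x') (hl.symm.trans (hh.trans hl'))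
      exact ⟨k, hk⟩
    · rintro ⟨h, hh⟩
      have hh : Link x.2.1 x'.2.1 h.toEquiv := Link.ofIso h hh
      obtain ⟨k, hk⟩ := transport hp hd hd' (hl.trans (hh.trans hl'.symm))
      exact ⟨k⟩
  rw [quot_equiv (groupIsoRel_equiv p n) hs R hq1 hq2 hq3, card_quot hs, Fintype.sum_sigma]
  refine Finset.sum_congr rfl (fun i _ => ?_)
  rw [← finsum_set_coe_eq_finsum_mem, finsum_eq_sum_of_fintype]
  refine Finset.sum_congr rfl (fun φ _ => ?_)
  congr 2
  obtain ⟨φ, hφ1, hφ2⟩ := φ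
  have horb : ∀ τ ∈ autOrbit (E i) φ, τ ∈ NSet n (E i) ∧
      ∃ h : E i ≃* E i, ∀ t, h (φ t) = τ (h t) := by
    rintro τ ⟨α, hα⟩
    have hsc : ∀ t, α (φ t) = τ (α t) := by
      intro t
      rw [hα, α.symm_apply_apply]
    refine ⟨⟨?_, ?_⟩, α, hsc⟩
    · intro x
      rw [hα, Subgroup.mem_center_iff]
      intro g
      obtain ⟨g, rfl⟩ := α.surjective g
      rw [← map_mul, ← map_mul, Subgroup.mem_center_iff.mp (hφ1 _)]
    · intro x
      obtain ⟨t, rfl⟩ := α.surjective x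
      have h1 : Function.Semiconj α φ τ := hsc
      rw [← (h1.iterate_right n).eq, hφ2, map_one]
  symm
  let Ψ : autOrbit (E i) φ → {y : X // s ⟨i, φ, hφ1, hφ2⟩ y} := fun τ =>
    ⟨⟨i, τ.1, (horb τ.1 τ.2).1⟩, (horb τ.1 τ.2).2⟩
  apply Nat.card_eq_of_bijective Ψ
  constructor
  · rintro ⟨τ, h⟩ ⟨τ', h'⟩ hh
    have h1 := congrArg Subtype.val hh
    simp only [Ψ] at h1
    rw [Sigma.mk.injEq] at h1
    have h2 := eq_of_heq h1.2
    exact Subtype.ext (Subtype.mk.inj h2)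
  · rintro ⟨⟨j, ψ, hψ⟩, h, hh⟩
    obtain rfl : i = j := htransv i j ⟨h⟩
    refine ⟨⟨ψ, h, fun x => ?_⟩, rfl⟩
    have := hh (h.symm x)
    simp only [MulEquiv.apply_symm_apply] at this
    exact this.symm

end CF

/-- Let `p ≥ n` with `p` prime, and let `E : ι → Type` be a transversal for the isomorphism
classes of groups of order `p ^ n` and exponent `p`.  Then the number of isomorphism classes of
groups of order `p ^ n` whose derived subgroup has exponent dividing `p` equals
`∑_{E} ∑_{φ ∈ N_E} 1 / |φ^{Aut(E)}|`. -/
theorem count_formula (p n : ℕ) (hp : p.Prime) (hn : 1 ≤ n) (hpn : n ≤ p)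
    (ι : Type) [Fintype ι] (E : ι → Type) [∀ i, Group (E i)]
    (hcard : ∀ i, Nat.card (E i) = p ^ n)
    (hexp : ∀ i, ∀ x : E i, x ^ p = 1)
    (hnontriv : ∀ i, Nontrivial (E i))
    (htransv : ∀ i j : ι, Nonempty (E i ≃* E j) → i = j)
    (hcomplete : ∀ (G : Type) (_ : Group G), Nat.card G = p ^ n → (∀ x : G, x ^ p = 1) →
      Nontrivial G → ∃ i : ι, Nonempty (G ≃* E i)) :
    (Nat.card (Quot (groupIsoRel p n)) : ℚ) =
      ∑ i : ι, ∑ᶠ φ ∈ NSet n (E i), (1 : ℚ) / (Nat.card (autOrbit (E i) φ)) := by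
  exact CF.main p n hp hn hpn ι E hcard hexp htransv hcomplete
end

section
/- Let p be a prime, n a natural number, and K a finite-dimensional Lie algebra over ℤ/pℤ. Let C(K) be the set of (ℤ/pℤ)-linear endomorphisms σ of K such that σ^n = 0, the image of σ is contained in the center Z(K), and σ(⁅x,y⁆) = ⁅σ(x), y⁆ for all x, y ∈ K. The group Aut_{Lie}(K) of Lie algebra automorphisms of K acts on C(K) by conjugation (α·σ = α∘σ∘α⁻¹). Then there is a bijection between the set of orbits of this action and the set of isomorphism classes of Lie algebras L over R_n = (ℤ/pℤ)[X]/(X^n) satisfying T•⁅a,b⁆ = 0 for all a,b ∈ L (T the image of X), whose underlying (ℤ/pℤ)-Lie algebra (obtained by restricting scalars along ℤ/pℤ → R_n) is isomorphic to K. Explicitly, σ ∈ C(K) corresponds to the R_n-Lie algebra structure on K in which T acts as σ. -/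
set_option synthInstance.maxHeartbeats 1000000

open Polynomial

/-- The ring `R_n = (ℤ/pℤ)[X]/(Xⁿ)`. -/
noncomputable abbrev Rn (p n : ℕ) : Type :=
  Polynomial (ZMod p) ⧸ Ideal.span {(X : Polynomial (ZMod p)) ^ n}

/-- `T`, the image of `X` in `R_n`. -/
noncomputable def Tn (p n : ℕ) : Rn p n := Ideal.Quotient.mk _ X

/-- The set `C(K)` of `ℤ/pℤ`-linear endomorphisms `σ` of `K` with `σ ^ n = 0`, image contained
in the centre `Z(K)`, and `σ⁅x, y⁆ = ⁅σ x, y⁆`. -/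
def CSet (p n : ℕ) (K : Type) [LieRing K] [LieAlgebra (ZMod p) K] :
    Set (Module.End (ZMod p) K) :=
  {σ | σ ^ n = 0 ∧ (∀ x : K, σ x ∈ LieAlgebra.center (ZMod p) K) ∧
    ∀ x y : K, σ ⁅x, y⁆ = ⁅σ x, y⁆}

/-- Conjugation of elements of `C(K)` by Lie algebra automorphisms of `K`:
`σ₁ ∼ σ₂` iff `σ₂ = α ∘ σ₁ ∘ α⁻¹` for some `α ∈ Aut_Lie(K)`. -/
def conjRel (p n : ℕ) (K : Type) [LieRing K] [LieAlgebra (ZMod p) K]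
    (σ₁ σ₂ : CSet p n K) : Prop :=
  ∃ α : K ≃ₗ⁅ZMod p⁆ K, ∀ x : K, α (σ₁.1 x) = σ₂.1 (α x)

/-- Bundled `R_n`-Lie algebras `L` with `T • ⁅a, b⁆ = 0` whose underlying `ℤ/pℤ`-Lie algebra
(obtained by restricting scalars along `ℤ/pℤ → R_n`) is isomorphic to `K`. -/
def GoodLieOver (p n : ℕ) (K : Type) [LieRing K] [LieAlgebra (ZMod p) K] : Type 1 :=
  { q : Σ (L : Type) (lr : LieRing L), @LieAlgebra (Rn p n) L _ lr //
      letI := q.2.1; letI := q.2.2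
      (∀ a b : q.1, Tn p n • ⁅a, b⁆ = 0) ∧
      ∃ e : q.1 ≃ K, (∀ a b : q.1, e (a + b) = e a + e b) ∧
        (∀ a b : q.1, e ⁅a, b⁆ = ⁅e a, e b⁆) ∧
        ∀ (c : ZMod p) (a : q.1), e ((algebraMap (ZMod p) (Rn p n) c) • a) = c • e a }

/-- `R_n`-linear Lie algebra isomorphism between two bundled `R_n`-Lie algebras. -/
def lieIsoRel (p n : ℕ) (K : Type) [LieRing K] [LieAlgebra (ZMod p) K]
    (q₁ q₂ : GoodLieOver p n K) : Prop :=
  letI := q₁.1.2.1; letI := q₁.1.2.2; letI := q₂.1.2.1; letI := q₂.1.2.2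
  Nonempty (q₁.1.1 ≃ₗ⁅Rn p n⁆ q₂.1.1)

theorem rn_map_smul (p n : ℕ) {L L' : Type} [AddCommGroup L] [AddCommGroup L']
    [Module (Rn p n) L] [Module (Rn p n) L'] (f : L → L')
    (hadd : ∀ a b, f (a + b) = f a + f b)
    (hc : ∀ (c : ZMod p) (a : L), f ((algebraMap (ZMod p) (Rn p n) c) • a)
      = (algebraMap (ZMod p) (Rn p n) c) • f a)
    (hT : ∀ a : L, f (Tn p n • a) = Tn p n • f a) (r : Rn p n) (a : L) :
    f (r • a) = r • f a := by
  obtain ⟨g, rfl⟩ := Ideal.Quotient.mk_surjective r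
  induction g using Polynomial.induction_on' generalizing a with
  | add g h hg hh => rw [map_add, add_smul, add_smul, hadd, hg, hh]
  | monomial k c =>
    have h1 : (Ideal.Quotient.mk (Ideal.span {(X : Polynomial (ZMod p)) ^ n})) (monomial k c)
        = algebraMap (ZMod p) (Rn p n) c * Tn p n ^ k := by
      rw [← C_mul_X_pow_eq_monomial, map_mul, map_pow]; rfl
    rw [h1, mul_smul, mul_smul, hc]
    congr 1
    induction k generalizing a with
    | zero => simp
    | succ k ih =>
      rw [pow_succ, mul_smul, mul_smul, ih, hT]
      rw [← C_mul_X_pow_eq_monomial, map_mul, map_pow]; rfl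

section build
variable (p n : ℕ) (K : Type) [LieRing K] [LieAlgebra (ZMod p) K]

/-- The ring hom from `R_n` sending `T` to `σ`. -/
noncomputable def rnHom (σ : CSet p n K) : Rn p n →+* Module.End (ZMod p) K :=
  Ideal.Quotient.lift _ (aeval σ.1 : (ZMod p)[X] →ₐ[ZMod p] _).toRingHom (by
    intro a ha
    obtain ⟨b, rfl⟩ := Ideal.mem_span_singleton.1 ha
    simp [σ.2.1])

theorem rnHom_T (σ : CSet p n K) : rnHom p n K σ (Tn p n) = σ.1 := by
  simp [rnHom, Tn]

theorem rnHom_c (σ : CSet p n K) (c : ZMod p) (x : K) :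
    rnHom p n K σ (algebraMap (ZMod p) (Rn p n) c) x = c • x := by
  change (aeval σ.1 (C c) : Module.End (ZMod p) K) x = _
  simp

theorem cset_lie (σ : CSet p n K) (x y : K) : ⁅σ.1 x, y⁆ = 0 := by
  have h := (LieModule.mem_maxTrivSubmodule (R := ZMod p) (L := K) (M := K) (σ.1 x)).1 (σ.2.2.1 x) y
  rw [← lie_skew, h, neg_zero]

theorem cset_lie' (σ : CSet p n K) (x y : K) : ⁅x, σ.1 y⁆ = 0 := by
  rw [← lie_skew, cset_lie, neg_zero]

/-- The module structure. -/
noncomputable abbrev rnMod (σ : CSet p n K) : Module (Rn p n) K :=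
  Module.compHom K (rnHom p n K σ)

/-- The Lie algebra structure on `K` in which `T` acts as `σ`. -/
noncomputable abbrev rnLie (σ : CSet p n K) : LieAlgebra (Rn p n) K :=
  { rnMod p n K σ with
    lie_smul := by
      intro r x y
      letI := rnMod p n K σ
      refine rn_map_smul p n (fun y => ⁅x, y⁆) (lie_add x) ?_ ?_ r y
      · intro c a
        change ⁅x, rnHom p n K σ _ a⁆ = rnHom p n K σ _ ⁅x, a⁆
        rw [rnHom_c, rnHom_c, lie_smul]
      · intro a
        change ⁅x, rnHom p n K σ _ a⁆ = rnHom p n K σ _ ⁅x, a⁆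
        rw [rnHom_T, cset_lie', σ.2.2.2, cset_lie] }

/-- The bundled version. -/
noncomputable def toGood (σ : CSet p n K) : GoodLieOver p n K :=
  ⟨⟨K, inferInstance, rnLie p n K σ⟩, by
    refine ⟨?_, Equiv.refl _, fun _ _ => rfl, fun _ _ => rfl, ?_⟩
    · intro (a : K) (b : K)
      change rnHom p n K σ _ ⁅a, b⁆ = 0
      rw [rnHom_T, σ.2.2.2, cset_lie]
    · intro c (a : K)
      exact rnHom_c p n K σ c a⟩

theorem lieIsoRel_equiv : Equivalence (lieIsoRel p n K) where
  refl q := by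
    letI := q.1.2.1; letI := q.1.2.2
    exact ⟨LieEquiv.refl⟩
  symm {q r} h := by
    letI := q.1.2.1; letI := q.1.2.2
    letI := r.1.2.1; letI := r.1.2.2
    obtain ⟨h⟩ := h
    exact ⟨h.symm⟩
  trans {q r s} h h' := by
    letI := q.1.2.1; letI := q.1.2.2
    letI := r.1.2.1; letI := r.1.2.2
    letI := s.1.2.1; letI := s.1.2.2
    obtain ⟨h⟩ := h
    obtain ⟨h'⟩ := h'
    exact ⟨h.trans h'⟩

/-- Build an `R_n`-Lie isomorphism. -/
theorem mkIso {L L' : Type} [LieRing L] [LieRing L'] [LieAlgebra (Rn p n) L]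
    [LieAlgebra (Rn p n) L'] (f : L ≃ L')
    (hadd : ∀ a b, f (a + b) = f a + f b) (hlie : ∀ a b, f ⁅a, b⁆ = ⁅f a, f b⁆)
    (hc : ∀ (c : ZMod p) (a : L), f ((algebraMap (ZMod p) (Rn p n) c) • a)
      = (algebraMap (ZMod p) (Rn p n) c) • f a)
    (hT : ∀ a : L, f (Tn p n • a) = Tn p n • f a) : Nonempty (L ≃ₗ⁅Rn p n⁆ L') :=
  ⟨{ toFun := f
     invFun := f.symm
     left_inv := f.left_inv
     right_inv := f.right_inv
     map_add' := hadd
     map_smul' := rn_map_smul p n f hadd hc hT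
     map_lie' := fun {a b} => hlie a b }⟩

theorem unIso {L L' : Type} [LieRing L] [LieRing L'] [LieAlgebra (Rn p n) L]
    [LieAlgebra (Rn p n) L'] (h : Nonempty (L ≃ₗ⁅Rn p n⁆ L')) :
    ∃ f : L ≃ L', (∀ a b, f (a + b) = f a + f b) ∧ (∀ a b, f ⁅a, b⁆ = ⁅f a, f b⁆) ∧
      ∀ (r : Rn p n) (a : L), f (r • a) = r • f a := by
  obtain ⟨f⟩ := h
  exact ⟨f.toLinearEquiv.toEquiv, map_add f.toLinearEquiv, LieEquiv.map_lie f,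
    map_smul f.toLinearEquiv⟩

theorem toGood_rel (σ τ : CSet p n K) :
    conjRel p n K σ τ ↔ lieIsoRel p n K (toGood p n K σ) (toGood p n K τ) := by
  constructor
  · rintro ⟨α, h⟩
    refine @mkIso p n K K _ _ (rnLie p n K σ) (rnLie p n K τ) α.toLinearEquiv.toEquiv (map_add α.toLinearEquiv)
      (LieEquiv.map_lie α) ?_ ?_
    · intro c a
      change α (rnHom p n K σ _ a) = rnHom p n K τ _ (α a)
      rw [rnHom_c, rnHom_c]
      exact map_smul α.toLinearEquiv c a
    · intro a
      change α (rnHom p n K σ _ a) = rnHom p n K τ _ (α a)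
      rw [rnHom_T, rnHom_T, h]
  · intro f
    obtain ⟨g, hadd, hl, hs'⟩ :=
      @unIso p n K K _ _ (rnLie p n K σ) (rnLie p n K τ) f
    have hs : ∀ (r : Rn p n) (a : K), g (rnHom p n K σ r a) = rnHom p n K τ r (g a) := hs'
    refine ⟨{ toFun := g, invFun := g.symm, left_inv := g.left_inv, right_inv := g.right_inv,
              map_add' := hadd, map_smul' := ?_, map_lie' := fun {a b} => hl a b }, ?_⟩
    · intro c a
      have := hs (algebraMap _ _ c) a
      rwa [rnHom_c, rnHom_c] at this
    · intro x
      have := hs (Tn p n) x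
      rwa [rnHom_T, rnHom_T] at this

theorem Tn_pow : Tn p n ^ n = 0 := by
  rw [Tn, ← map_pow, Ideal.Quotient.eq_zero_iff_mem]
  exact Ideal.mem_span_singleton_self _

theorem toGood_surj (q : GoodLieOver p n K) :
    ∃ σ : CSet p n K, lieIsoRel p n K q (toGood p n K σ) := by
  obtain ⟨⟨L, lr, la⟩, hT, e, hadd, hlie, hc⟩ := q
  dsimp only at hT e hadd hlie hc
  have hadd' : ∀ a b, e.symm (a + b) = e.symm a + e.symm b := fun a b => by
    apply e.injective; simp [hadd]
  have hc' : ∀ (c : ZMod p) a, e.symm (c • a) = algebraMap (ZMod p) (Rn p n) c • e.symm a :=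
    fun c a => by
      apply e.injective; rw [hc]; simp
  let s : Module.End (ZMod p) K :=
    { toFun := fun x => e (Tn p n • e.symm x)
      map_add' := fun x y => by rw [hadd', smul_add, hadd]
      map_smul' := fun c x => by
        rw [hc', smul_comm, hc]; rfl }
  have hs : ∀ x, s x = e (Tn p n • e.symm x) := fun _ => rfl
  have hpow : ∀ (k : ℕ) x, (s ^ k) x = e (Tn p n ^ k • e.symm x) := by
    intro k
    induction k with
    | zero => intro x; simp
    | succ k ih =>
      intro x
      rw [pow_succ, Module.End.mul_apply, ih, hs, e.symm_apply_apply, pow_succ, mul_smul]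
  have e0 : e 0 = 0 := by simpa using hadd 0 0
  have hl1 : ∀ x y : K, s ⁅x, y⁆ = 0 := by
    intro x y
    obtain ⟨a, rfl⟩ := e.surjective x
    obtain ⟨b, rfl⟩ := e.surjective y
    rw [← hlie, hs, e.symm_apply_apply, hT, e0]
  have hl2 : ∀ x y : K, ⁅x, s y⁆ = 0 := by
    intro x y
    obtain ⟨a, rfl⟩ := e.surjective x
    obtain ⟨b, rfl⟩ := e.surjective y
    rw [hs, ← hlie, e.symm_apply_apply, lie_smul, hT, e0]
  let σ : CSet p n K := ⟨s, by
    refine ⟨?_, ?_, ?_⟩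
    · ext x
      have h0 : (0 : Rn p n) • e.symm x = 0 := zero_smul (Rn p n) (e.symm x)
      rw [hpow, Tn_pow]
      exact (congrArg e h0).trans e0
    · intro x
      exact (LieModule.mem_maxTrivSubmodule (R := ZMod p) (L := K) (M := K) (s x)).2
        fun y => hl2 y x
    · intro x y
      rw [hl1, ← lie_skew, hl2, neg_zero]⟩
  refine ⟨σ, ?_⟩
  refine @mkIso p n L K _ _ la (rnLie p n K σ) e hadd hlie ?_ ?_
  · intro c a
    change _ = rnHom p n K σ _ (e a)
    rw [rnHom_c, hc]
  · intro a
    change _ = rnHom p n K σ _ (e a)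
    rw [rnHom_T]
    change _ = s (e a)
    rw [hs, e.symm_apply_apply]

end build

/-- For a finite-dimensional `ℤ/pℤ`-Lie algebra `K`, there is a bijection between the orbits of
the conjugation action of `Aut_Lie(K)` on `C(K)` and the isomorphism classes of `R_n`-Lie
algebras `L` with `T • ⁅a, b⁆ = 0` whose underlying `ℤ/pℤ`-Lie algebra is isomorphic to `K`. -/
theorem orbit_structure_correspondence (p n : ℕ) (hp : p.Prime)
    (K : Type) [LieRing K] [LieAlgebra (ZMod p) K] [Module.Finite (ZMod p) K] :
    Nonempty (Quot (conjRel p n K) ≃ Quot (lieIsoRel p n K)) := by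
  refine ⟨Equiv.ofBijective
    (Quot.map (toGood p n K) fun a b h => (toGood_rel p n K a b).1 h) ⟨?_, ?_⟩⟩
  · rintro ⟨a⟩ ⟨b⟩ h
    exact Quot.sound ((toGood_rel p n K a b).2 (((lieIsoRel_equiv p n K).quot_mk_eq_iff _ _).1 h))
  · rintro ⟨q⟩
    obtain ⟨σ, h⟩ := toGood_surj p n K q
    exact ⟨Quot.mk _ σ, (Quot.sound h).symm⟩
end
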